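/- For every integer n ≥ 0, the sixth symmetrized rank moment satisfies η₆(49n+47) ≡ 0 (mod 7). -/

import Mathlib

/-- The rank of a partition: its largest part minus its number of parts. -/
def partitionRank {n : ℕ} (P : Nat.Partition n) : ℤ :=
  (P.parts.sup : ℤ) - (P.parts.card : ℤ)

/-- `N(m,n)`: the number of partitions of `n` with rank `m`. -/
noncomputable def rankCount (m : ℤ) (n : ℕ) : ℕ :=
  Nat.card {P : Nat.Partition n // partitionRank P = m}

/-- The generalized binomial coefficient `C(x,k) = x(x-1)⋯(x-k+1)/k!` for an integer `x`. -/
def intChoose (x : ℤ) (k : ℕ) : ℤ :=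
  (∏ i ∈ Finset.range k, (x - (i : ℤ))) / (Nat.factorial k : ℤ)

/-- The sixth symmetrized rank moment `η₆(n) = Σ_{m∈ℤ} C(m+2,6)·N(m,n)`. -/
noncomputable def eta6 (n : ℕ) : ℤ :=
  ∑ᶠ m : ℤ, intChoose (m + 2) 6 * (rankCount m n : ℤ)

/-!
Modulo `7` the weight `C(m + 2, 6)` is `1` if `m ≡ 4` and `0` otherwise, so `η₆(n)` counts the
partitions of `n` with rank `≡ 4 (mod 7)`. By the symmetry of the rank this count is the coefficient
of `qⁿ` in `∑ᵢ (G_{7i+3} - G_{7i+5})`, where `G_s` is the generating function of the partitions of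
rank at least `s`.

Dyson's bijection gives `G_s = q^{s+1} (𝓟 - G_{s+3})` with `𝓟 = ∑ p(n) qⁿ`. Let `cₘ` be the
coefficient of `zᵐ` in `1 / ((z q; q)_∞ (q / z; q)_∞)³` and `θ = q d/dq`. The series
`𝓟⁵ (6 θ + s (s - 1)) G_s` and `∑_{m ≥ s} (m - s) (m - s + 1) cₘ` satisfy the same recursion in `s`,
hence agree; this is a form of the rank–crank differential equation of Atkin and Garvan.
For `n = 49 k + 47` and `s ≡ 3, 5 (mod 7)` the operator `6 θ + s (s - 1)` multiplies the coefficient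
of `qⁿ` by `1` modulo `7`. On the crank side, symmetrising in `m` and multiplying by `7` turns the
sum over `i` of the kernels into the polynomial `-4 m⁸ + 7 m⁶ - 3 m²` modulo `49`. So, modulo `49`,
`14` times the count is a coefficient of `𝓟` times a polynomial in the series `∑ σₖ(n) qⁿ`.
The coefficient of `qⁿ` in `(24 θ - 1) (𝓟 E₆)` is divisible by `49`, which eliminates the term of
weight 8. What remains is `7` times a coefficient of `𝓟` times a quasimodular form. By Ramanujan's
differential equations, `q²` times that product has modulo `7` the same coefficient of
`q ^ (49 (k + 1))` as the sum of a `θ`-derivative and a multiple of the seventh power of one, and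
both of these coefficients vanish.
-/

namespace RankMoment

open PowerSeries Finset
open scoped PowerSeries.WithPiTopology ArithmeticFunction.sigma

noncomputable section

/-! ### The Euler operator -/

/-- The Euler operator `X d/dX` on formal power series, bundled as a derivation so that the
Leibniz rules of `Derivation` apply. -/
def theta {R : Type*} [CommRing R] : Derivation R R⟦X⟧ R⟦X⟧ :=
  (X : R⟦X⟧) • derivative R

local notation "θ" => theta

section Theta

variable {R : Type*} [CommRing R]

lemma coeff_theta (n : ℕ) (p : R⟦X⟧) : coeff n (θ p) = n * coeff n p := by
  change coeff n (X * derivative R p) = _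
  cases n with
  | zero => simp
  | succ n => rw [coeff_succ_X_mul, coeff_derivative, mul_comm]; push_cast; rfl

lemma coeff_theta_iterate (n k : ℕ) (p : R⟦X⟧) : coeff n (θ^[k] p) = n ^ k * coeff n p := by
  induction k with
  | zero => simp
  | succ k ih => rw [Function.iterate_succ_apply', coeff_theta, ih, pow_succ']; ring

lemma theta_X : θ (X : R⟦X⟧) = X := by
  change (X : R⟦X⟧) * derivative R X = (X : R⟦X⟧)
  rw [derivative_X, mul_one]

lemma theta_X_pow (k : ℕ) : θ (X ^ k : R⟦X⟧) = k * (X : R⟦X⟧) ^ k := by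
  cases k with
  | zero => simp
  | succ k =>
    rw [Derivation.leibniz_pow, theta_X, smul_eq_mul, nsmul_eq_mul, Nat.add_sub_cancel, pow_succ]

lemma theta_ofNat (n : ℕ) [n.AtLeastTwo] : θ (ofNat(n) : R⟦X⟧) = 0 := by
  rw [← Nat.cast_ofNat, Derivation.map_natCast]

lemma theta_ofNat_mul (n : ℕ) [n.AtLeastTwo] (p : R⟦X⟧) : θ (ofNat(n) * p) = ofNat(n) * θ p := by
  rw [Derivation.leibniz, theta_ofNat, smul_zero, add_zero, smul_eq_mul]

lemma theta_one : θ (1 : R⟦X⟧) = 0 :=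
  Derivation.map_one_eq_zero _

lemma theta_C (a : R) : θ (C a) = 0 :=
  theta.map_algebraMap a

lemma theta_mul (p q : R⟦X⟧) : θ (p * q) = θ p * q + p * θ q := by
  rw [Derivation.leibniz, smul_eq_mul, smul_eq_mul]
  ring

lemma theta_pow (p : R⟦X⟧) (n : ℕ) : θ (p ^ n) = n * p ^ (n - 1) * θ p := by
  rw [Derivation.leibniz_pow, smul_eq_mul, nsmul_eq_mul, mul_assoc]

lemma theta_map {S : Type*} [CommRing S] (f : R →+* S) (p : R⟦X⟧) : θ (map f p) = map f (θ p) := by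
  ext n
  simp only [coeff_theta, coeff_map, map_mul, map_natCast]

lemma theta_rescale (a : R) (p : R⟦X⟧) : θ (rescale a p) = rescale a (θ p) := by
  ext n
  simp only [coeff_theta, coeff_rescale]
  ring

lemma theta_pow_eq_zero {p n : ℕ} [CharP R p] (h : p ∣ n) (f : R⟦X⟧) : θ (f ^ n) = 0 := by
  ext m
  have hn : (n : R⟦X⟧) = C (n : R) := (map_natCast C n).symm
  rw [theta_pow, hn, (CharP.cast_eq_zero_iff R p n).mpr h, map_zero, zero_mul, zero_mul]

lemma coeff_theta_eq_zero {p n : ℕ} [CharP R p] (h : p ∣ n) (f : R⟦X⟧) :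
    coeff n (θ f) = 0 := by
  rw [coeff_theta, (CharP.cast_eq_zero_iff R p n).mpr h, zero_mul]

lemma continuous_theta [TopologicalSpace R] [ContinuousMul R] :
    Continuous (θ : R⟦X⟧ → R⟦X⟧) := by
  refine continuous_iff_continuousAt.mpr fun p ↦
    (WithPiTopology.tendsto_iff_coeff_tendsto R _ _ _).mpr fun n ↦ ?_
  simp only [coeff_theta]
  exact ((WithPiTopology.continuous_coeff R n).tendsto p).const_mul _

end Theta

/-! ### Coefficientwise convergent sums -/

section Summable

lemma X_pow_add_dvd_mul {R : Type*} [CommRing R] {f g : ℕ → R⟦X⟧} (hf : ∀ i, X ^ i ∣ f i)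
    (hg : ∀ i, X ^ i ∣ g i) (i j : ℕ) : X ^ (i + j) ∣ f i * g j := by
  rw [pow_add]
  exact mul_dvd_mul (hf i) (hg j)

variable {R : Type*} [CommRing R] [TopologicalSpace R]

lemma summable_of_X_pow_dvd {ι : Type*} {w : ι → ℕ} (hw : ∀ n, {i | w i ≤ n}.Finite)
    {f : ι → R⟦X⟧} (hf : ∀ i, X ^ w i ∣ f i) : Summable f := by
  refine (WithPiTopology.summable_iff_summable_coeff R).mpr fun n ↦
    summable_of_hasFiniteSupport ((hw n).subset fun i hi ↦ ?_)
  by_contra h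
  exact hi (X_pow_dvd_iff.mp (hf i) n (not_le.mp h))

lemma summable_nat_of_X_pow_dvd {f : ℕ → R⟦X⟧} (hf : ∀ i, X ^ i ∣ f i) : Summable f :=
  summable_of_X_pow_dvd Set.finite_Iic hf

lemma summable_prod_of_X_pow_dvd {f : ℕ × ℕ → R⟦X⟧} (hf : ∀ p, X ^ (p.1 + p.2) ∣ f p) :
    Summable f := by
  refine summable_of_X_pow_dvd (fun n ↦ ?_) hf
  refine ((Set.finite_Iic n).prod (Set.finite_Iic n)).subset fun p hp ↦ ?_
  simp only [Set.mem_ofPred_eq, Set.mem_prod, Set.mem_Iic] at hp ⊢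
  omega

lemma tsum_prod_of_X_pow_dvd [T3Space R] [IsTopologicalRing R] {f : ℕ × ℕ → R⟦X⟧}
    (hf : ∀ p, X ^ (p.1 + p.2) ∣ f p) : ∑' p, f p = ∑' b, ∑' a, f (a, b) := by
  have hswap : ∀ p : ℕ × ℕ, X ^ (p.1 + p.2) ∣ f p.swap := fun p ↦ add_comm p.1 p.2 ▸ hf p.swap
  rw [← (Equiv.prodComm ℕ ℕ).tsum_eq]
  exact (summable_prod_of_X_pow_dvd hswap).tsum_prod' fun b ↦ summable_nat_of_X_pow_dvd fun a ↦
    (pow_dvd_pow X (Nat.le_add_right a b)).trans (hf (a, b))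

lemma tsum_prod_eq_tsum_sum_antidiagonal_of_X_pow_dvd [T3Space R] [IsTopologicalRing R]
    {f : ℕ × ℕ → R⟦X⟧} (hf : ∀ p, X ^ (p.1 + p.2) ∣ f p) :
    ∑' p, f p = ∑' n, ∑ p ∈ antidiagonal n, f p := by
  have hsum : Summable fun c ↦ f (HasAntidiagonal.sigmaAntidiagonalEquivProd c) :=
    HasAntidiagonal.sigmaAntidiagonalEquivProd.summable_iff.mpr (summable_prod_of_X_pow_dvd hf)
  rw [← HasAntidiagonal.sigmaAntidiagonalEquivProd.tsum_eq f,
    hsum.tsum_sigma' fun n ↦ (hasSum_fintype _).summable]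
  exact tsum_congr fun n ↦ (tsum_fintype _).trans (sum_finset_coe f _)

lemma tsum_coeff_rescale_X_mul [T3Space R] [IsTopologicalRing R] (f g : R⟦X⟧⟦X⟧) :
    ∑' i, coeff i (rescale X (f * g)) =
      (∑' i, coeff i (rescale X f)) * ∑' i, coeff i (rescale X g) := by
  have hdvd (f : R⟦X⟧⟦X⟧) (i : ℕ) : X ^ i ∣ coeff i (rescale X f) :=
    coeff_rescale f X i ▸ dvd_mul_right _ _
  rw [(summable_nat_of_X_pow_dvd (hdvd f)).tsum_mul_tsum_eq_tsum_sum_antidiagonal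
    (summable_nat_of_X_pow_dvd (hdvd g))
    (summable_prod_of_X_pow_dvd fun p ↦ X_pow_add_dvd_mul (hdvd f) (hdvd g) p.1 p.2)]
  simp only [map_mul, coeff_mul]

end Summable

/-! ### Ramanujan's differential equations -/

section QExpansion

open UpperHalfPlane hiding I
open ModularForm ModularFormClass EisensteinSeries Function Complex
open Function.Periodic (qParam norm_qParam)
open scoped Manifold MatrixGroups

/-- The function `f` on the upper half plane is the sum of the series `p` evaluated at
`q = exp(2πiτ)`. -/
def HasQExpansion (f : ℍ → ℂ) (p : ℂ⟦X⟧) : Prop :=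
  ∀ τ : ℍ, HasSum (fun m ↦ coeff m p • qParam (1 : ℝ) τ ^ m) (f τ)

namespace HasQExpansion

variable {f g : ℍ → ℂ} {p r : ℂ⟦X⟧}

lemma add (hf : HasQExpansion f p) (hg : HasQExpansion g r) : HasQExpansion (f + g) (p + r) :=
  fun τ ↦ by simpa [add_mul] using (hf τ).add (hg τ)

lemma sub (hf : HasQExpansion f p) (hg : HasQExpansion g r) : HasQExpansion (f - g) (p - r) :=
  fun τ ↦ by simpa [sub_mul] using (hf τ).sub (hg τ)

lemma const_smul (c : ℂ) (hf : HasQExpansion f p) : HasQExpansion (c • f) (C c * p) :=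
  fun τ ↦ by simpa [mul_assoc] using (hf τ).mul_left c

lemma mul (hf : HasQExpansion f p) (hg : HasQExpansion g r) : HasQExpansion (f * g) (p * r) := by
  intro τ
  have hcauchy := (summable_norm_sum_mul_antidiagonal_of_summable_norm
    (hf τ).summable.norm (hg τ).summable.norm).of_norm.hasSum
  rw [← tsum_mul_tsum_eq_tsum_sum_antidiagonal_of_summable_norm
    (hf τ).summable.norm (hg τ).summable.norm, (hf τ).tsum_eq, (hg τ).tsum_eq] at hcauchy
  convert! hcauchy using 2 with n
  rw [coeff_mul, Finset.sum_smul]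
  refine Finset.sum_congr rfl fun ij hij ↦ ?_
  rw [← mem_antidiagonal.mp hij, pow_add, smul_mul_smul_comm, smul_eq_mul]

end HasQExpansion

lemma hasDerivAt_qParam (w : ℂ) :
    HasDerivAt (qParam (1 : ℝ)) (2 * Real.pi * I * qParam (1 : ℝ) w) w := by
  have hlin : HasDerivAt (fun w : ℂ ↦ 2 * Real.pi * I * w / (1 : ℝ)) (2 * Real.pi * I) w := by
    simpa using (hasDerivAt_id w).const_mul (2 * Real.pi * I)
  exact (mul_comm (qParam (1 : ℝ) w) _) ▸ hlin.cexp

lemma deriv_smul_qParam_pow (c : ℂ) (n : ℕ) (w : ℂ) :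
    deriv (fun w ↦ c • qParam (1 : ℝ) w ^ n) w =
      2 * Real.pi * I * (n * c * qParam (1 : ℝ) w ^ n) := by
  refine (((hasDerivAt_qParam w).pow n).const_smul c).deriv.trans ?_
  rw [smul_eq_mul]
  cases n with
  | zero => simp
  | succ n => rw [Nat.add_sub_cancel, pow_succ]; ring

lemma norm_smul_qParam_pow_le {w z : ℂ} (hwz : z.im ≤ w.im) (c : ℂ) (n : ℕ) :
    ‖c • qParam (1 : ℝ) w ^ n‖ ≤ ‖c • qParam (1 : ℝ) z ^ n‖ := by
  simp only [norm_smul, norm_pow, norm_qParam, neg_mul, div_one]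
  gcongr

lemma HasQExpansion.hasSum_deriv {f : ℍ → ℂ} {p : ℂ⟦X⟧} (hf : HasQExpansion f p) (τ : ℍ) :
    HasSum (fun n ↦ deriv (fun w ↦ coeff n p • qParam (1 : ℝ) w ^ n) τ)
      (deriv (f ∘ ofComplex) τ) := by
  let U : Set ℂ := {w | τ.im / 2 < w.im}
  let z : ℍ := ⟨⟨0, τ.im / 2⟩, half_pos τ.im_pos⟩
  have hU : IsOpen U := isOpen_lt continuous_const Complex.continuous_im
  have hτU : (τ : ℂ) ∈ U := half_lt_self τ.im_pos
  have hdiff (n : ℕ) : DifferentiableOn ℂ (fun w ↦ coeff n p • qParam (1 : ℝ) w ^ n) U :=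
    fun w _ ↦ (((hasDerivAt_qParam w).pow n).const_smul
      (coeff n p)).differentiableAt.differentiableWithinAt
  have hderiv := hasSum_deriv_of_summable_norm (hf z).summable.norm hdiff hU
    (fun n w hw ↦ norm_smul_qParam_pow_le (z := z) (le_of_lt hw) _ n) hτU
  have hsum : (fun w ↦ ∑' n, coeff n p • qParam (1 : ℝ) w ^ n) =ᶠ[nhds (τ : ℂ)] f ∘ ofComplex := by
    filter_upwards [isOpen_upperHalfPlaneSet.mem_nhds τ.2] with w hw
    rw [comp_apply, ofComplex_apply_of_im_pos hw]
    exact (hf ⟨w, hw⟩).tsum_eq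
  rwa [hsum.deriv_eq] at hderiv

lemma HasQExpansion.normalizedDeriv {f : ℍ → ℂ} {p : ℂ⟦X⟧} (hf : HasQExpansion f p) :
    HasQExpansion (Derivative.normalizedDerivOfComplex f) (θ p) := by
  intro τ
  have h := (hf.hasSum_deriv τ).mul_left (2 * Real.pi * I)⁻¹
  simp only [deriv_smul_qParam_pow, inv_mul_cancel_left₀ two_pi_I_ne_zero] at h
  simp only [coeff_theta, smul_eq_mul]
  exact h

lemma HasQExpansion.eq_zero_of_modular {f : ℍ → ℂ} {p : ℂ⟦X⟧} {k : ℕ} (hk : k < 12)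
    (hf : MDiff f) (hslash : ∀ γ : SL(2, ℤ), f ∣[(k : ℤ)] γ = f) (hp : HasQExpansion f p)
    (hp0 : constantCoeff p = 0) : p = 0 := by
  let F : ModularForm 𝒮ℒ (k : ℤ) :=
    { toFun := f
      slash_action_eq' := by
        rintro _ ⟨γ, rfl⟩
        exact hslash γ
      holo' := hf
      bdd_at_cusps' := by
        intro c hc
        rw [OnePoint.isBoundedAt_iff_forall_SL2Z (by simpa using hc)]
        intro γ _
        exact (hslash γ).symm ▸ isBoundedAtImInfty_of_hasSum_qExpansion one_pos hp }
  have hpF : p = qExpansion 1 F := PowerSeries.ext fun m ↦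
    ModularFormClass.qExpansion_coeff_unique (f := F) one_pos one_mem_strictPeriods_SL hp m
  have hF : F = 0 := by
    refine sturm_bound_levelOne_nat ?_
    rw [Nat.div_eq_of_lt hk, ← hpF, Nat.cast_zero, pos_iff_ne_zero,
      order_ne_zero_iff_constCoeff_eq_zero, hp0]
  rw [hpF, hF]
  exact qExpansion_zero 1

end QExpansion

/-- The series `∑ σₖ(n) qⁿ`. -/
def sigmaSeries (k : ℕ) : ℤ⟦X⟧ := mk fun n ↦ (σ k n : ℤ)

local notation "Φ" => sigmaSeries

/-- Ramanujan's `P`, the normalised Eisenstein series of weight 2. -/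
def ramanujanP : ℤ⟦X⟧ := 1 - 24 * Φ 1

/-- Ramanujan's `Q`, the normalised Eisenstein series of weight 4. -/
def ramanujanQ : ℤ⟦X⟧ := 1 + 240 * Φ 3

/-- Ramanujan's `R`, the normalised Eisenstein series of weight 6. -/
def ramanujanR : ℤ⟦X⟧ := 1 - 504 * Φ 5

lemma coeff_one_add_C_mul_sigmaSeries (c : ℤ) (k n : ℕ) :
    coeff n (1 + C c * Φ k) = if n = 0 then 1 else c * σ k n := by
  cases n <;> simp [sigmaSeries, -eq_intCast, coeff_one]

lemma ramanujanP_eq : ramanujanP = 1 + C (-24) * Φ 1 := by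
  rw [ramanujanP, map_neg, map_ofNat]; ring

lemma ramanujanQ_eq : ramanujanQ = 1 + C 240 * Φ 3 := by
  rw [ramanujanQ, map_ofNat]

lemma ramanujanR_eq : ramanujanR = 1 + C (-504) * Φ 5 := by
  rw [ramanujanR, map_neg, map_ofNat]; ring

section Ramanujan

open UpperHalfPlane hiding I
open ModularForm ModularFormClass EisensteinSeries Function Complex
open scoped Manifold MatrixGroups

/-- Coefficientwise embedding of integral power series into complex ones. -/
def toComplex : ℤ⟦X⟧ →+* ℂ⟦X⟧ := map (Int.castRingHom ℂ)

lemma toComplex_injective : Injective toComplex :=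
  map_injective _ Int.cast_injective

lemma coeff_toComplex (n : ℕ) (p : ℤ⟦X⟧) : coeff n (toComplex p) = ((coeff n p : ℤ) : ℂ) :=
  coeff_map ..

lemma theta_toComplex (p : ℤ⟦X⟧) : θ (toComplex p) = toComplex (θ p) :=
  theta_map _ p

lemma constantCoeff_toComplex_one_add (c : ℤ) (k : ℕ) :
    constantCoeff (toComplex (1 + C c * Φ k)) = 1 := by
  rw [← coeff_zero_eq_constantCoeff_apply, coeff_toComplex, coeff_one_add_C_mul_sigmaSeries,
    if_pos rfl, Int.cast_one]

lemma hasQExpansion_E {k : ℕ} (hk : 3 ≤ k) (hk2 : Even k) {c : ℤ}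
    (hc : -(2 * k / bernoulli k : ℂ) = c) :
    HasQExpansion (E hk) (toComplex (1 + C c * Φ (k - 1))) := by
  intro τ
  have h := hasSum_qExpansion (f := E hk) one_pos
    (SlashInvariantFormClass.periodic_comp_ofComplex (E hk) one_mem_strictPeriods_SL)
    (ModularFormClass.holo _) (ModularFormClass.bdd_at_infty _) τ
  convert! h using 3 with m
  rw [E_qExpansion_coeff hk hk2, hc, coeff_toComplex, coeff_one_add_C_mul_sigmaSeries]
  push_cast
  rfl

lemma hasQExpansion_E2 : HasQExpansion E2 (toComplex ramanujanP) := by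
  intro τ
  simp only [Periodic.qParam, ofReal_one, div_one]
  convert! hasSum_qExpansion_E2 (z := τ) using 3 with m
  rw [ramanujanP_eq, coeff_toComplex, coeff_one_add_C_mul_sigmaSeries]
  push_cast
  rfl

lemma hasQExpansion_E4 : HasQExpansion E₄ (toComplex ramanujanQ) :=
  ramanujanQ_eq ▸ hasQExpansion_E _ ⟨2, rfl⟩
    (by norm_num [show bernoulli 4 = -1 / 30 by decide +kernel])

lemma hasQExpansion_E6 : HasQExpansion E₆ (toComplex ramanujanR) :=
  ramanujanR_eq ▸ hasQExpansion_E _ ⟨3, rfl⟩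
    (by norm_num [show bernoulli 6 = 1 / 42 by decide +kernel])

lemma hasQExpansion_E8 :
    HasQExpansion (E (by norm_num : 3 ≤ 8)) (toComplex (1 + C 480 * Φ 7)) :=
  hasQExpansion_E _ ⟨4, rfl⟩ (by norm_num [show bernoulli 8 = -1 / 30 by decide +kernel])

lemma modularForm_slash_eq {k : ℤ} (f : ModularForm 𝒮ℒ k) (γ : SL(2, ℤ)) :
    (f : ℍ → ℂ) ∣[k] γ = f :=
  f.slash_action_eq' _ ⟨γ, rfl⟩

lemma HasQExpansion.serreDerivative {f : ℍ → ℂ} {p : ℂ⟦X⟧} (k : ℂ) (hf : HasQExpansion f p) :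
    HasQExpansion (Derivative.serreDerivative k f)
      (θ p - C (k * 12⁻¹) * (toComplex ramanujanP * p)) := by
  convert! hf.normalizedDeriv.sub ((hasQExpansion_E2.mul hf).const_smul (k * 12⁻¹)) using 1
  ext z
  simp [Derivative.serreDerivative_apply, mul_assoc]

lemma theta_eq_of_hasQExpansion {k : ℕ} (hk : k + 2 < 12) {f : ModularForm 𝒮ℒ (k : ℤ)}
    {g : ModularForm 𝒮ℒ ((k + 2 : ℕ) : ℤ)} {p r : ℂ⟦X⟧} (hf : HasQExpansion f p)
    (hg : HasQExpansion g r) (hp : constantCoeff p = 1) (hr : constantCoeff r = 1) :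
    12 * θ p = k * (toComplex ramanujanP * p - r) := by
  have hC : 12 * C (k * 12⁻¹ : ℂ) = (k : ℂ⟦X⟧) := by
    rw [← map_ofNat (C (R := ℂ)), ← map_mul, mul_comm,
      inv_mul_cancel_right₀ (OfNat.ofNat_ne_zero 12), map_natCast]
  suffices h : θ p - C (k * 12⁻¹ : ℂ) * (toComplex ramanujanP * p) + C (k * 12⁻¹ : ℂ) * r = 0 by
    linear_combination 12 * h + (toComplex ramanujanP * p - r) * hC
  refine HasQExpansion.eq_zero_of_modular hk ?_ (fun γ ↦ ?_)
    ((hf.serreDerivative k).add (hg.const_smul _)) ?_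
  · exact (Derivative.serreDerivative_mdifferentiable _ (ModularFormClass.holo f)).add
      ((ModularFormClass.holo g).const_smul _)
  · have hserre := Derivative.serreDerivative_slash_invariant (ModularFormClass.holo f)
      (modularForm_slash_eq f γ)
    rw [SlashAction.add_slash, ModularForm.SL_smul_slash, modularForm_slash_eq g]
    push_cast at hserre ⊢
    rw [hserre]
  · have hP : constantCoeff (toComplex ramanujanP) = 1 := by
      rw [ramanujanP_eq, constantCoeff_toComplex_one_add]
    have hθ : constantCoeff (θ p) = 0 := by
      rw [← coeff_zero_eq_constantCoeff_apply, coeff_theta, Nat.cast_zero, zero_mul]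
    simp [hθ, hp, hr, hP]

instance : CharZero ℤ⟦X⟧ :=
  charZero_of_injective_ringHom C_injective

theorem ramanujanQ_sq : ramanujanQ ^ 2 = 1 + 480 * Φ 7 := by
  suffices h : toComplex ramanujanQ * toComplex ramanujanQ - toComplex (1 + C 480 * Φ 7) = 0 by
    refine toComplex_injective ?_
    rw [map_pow, sq, sub_eq_zero.mp h, map_ofNat]
  refine HasQExpansion.eq_zero_of_modular (k := 8) (by norm_num) ?_ (fun γ ↦ ?_)
    ((hasQExpansion_E4.mul hasQExpansion_E4).sub hasQExpansion_E8) ?_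
  · exact ((ModularFormClass.holo E₄).mul (ModularFormClass.holo E₄)).sub
      (ModularFormClass.holo _)
  · have hsq := ModularForm.mul_slash_SL2 4 4 γ (E₄ : ℍ → ℂ) E₄
    have hE8 := modularForm_slash_eq (E (by norm_num : 3 ≤ 8)) γ
    rw [modularForm_slash_eq] at hsq
    norm_num at hsq hE8 ⊢
    rw [sub_eq_add_neg, SlashAction.add_slash, SlashAction.neg_slash, hsq, hE8]
  · rw [map_sub, map_mul, ramanujanQ_eq, constantCoeff_toComplex_one_add,
      constantCoeff_toComplex_one_add, one_mul, sub_self]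

theorem three_mul_theta_ramanujanQ :
    3 * θ ramanujanQ = ramanujanP * ramanujanQ - ramanujanR := by
  have h := theta_eq_of_hasQExpansion (k := 4) (by norm_num) hasQExpansion_E4 hasQExpansion_E6
    (ramanujanQ_eq ▸ constantCoeff_toComplex_one_add ..)
    (ramanujanR_eq ▸ constantCoeff_toComplex_one_add ..)
  rw [theta_toComplex, ← map_ofNat toComplex, ← map_natCast toComplex, ← map_mul, ← map_mul,
    ← map_sub, ← map_mul] at h
  refine mul_left_cancel₀ (OfNat.ofNat_ne_zero 4 : (4 : ℤ⟦X⟧) ≠ 0) ?_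
  linear_combination toComplex_injective h

theorem two_mul_theta_ramanujanR :
    2 * θ ramanujanR = ramanujanP * ramanujanR - ramanujanQ ^ 2 := by
  have h := theta_eq_of_hasQExpansion (k := 6) (by norm_num) hasQExpansion_E6 hasQExpansion_E8
    (ramanujanR_eq ▸ constantCoeff_toComplex_one_add ..) (constantCoeff_toComplex_one_add ..)
  rw [theta_toComplex, ← map_ofNat toComplex, ← map_natCast toComplex, ← map_mul, ← map_mul,
    ← map_sub, ← map_mul, map_ofNat, ← ramanujanQ_sq] at h
  refine mul_left_cancel₀ (OfNat.ofNat_ne_zero 6 : (6 : ℤ⟦X⟧) ≠ 0) ?_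
  linear_combination toComplex_injective h

end Ramanujan

/-! ### The generating function of partitions -/

/-- The generating function of the number of partitions. -/
def partitionSeries : ℤ⟦X⟧ := mk fun n ↦ (Fintype.card n.Partition : ℤ)

local notation "𝓟" => partitionSeries

section PartitionSeries

open Filter (Tendsto atTop tendsto_add_atTop_nat)
open Topology

/-- The geometric series `1 / (1 - q ^ d)`, equal to `1` for `d = 0`. -/
def geomSeries (d : ℕ) : ℤ⟦X⟧ := mk fun n ↦ if d ∣ n then 1 else 0

/-- The series `q ^ d / (1 - q ^ d)`, equal to `0` for `d = 0`. -/
def lambertSeries (d : ℕ) : ℤ⟦X⟧ := geomSeries d - 1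

/-- The reciprocal `1 / (q; q)_N` of the `q`-Pochhammer symbol. -/
def qPochhammerInv (N : ℕ) : ℤ⟦X⟧ := ∏ i ∈ range N, geomSeries (i + 1)

lemma coeff_lambertSeries (n d : ℕ) :
    coeff n (lambertSeries d) = if d ∈ n.divisors then 1 else 0 := by
  rw [lambertSeries, geomSeries, map_sub, coeff_mk, coeff_one]
  by_cases hn : n = 0 <;> simp [hn]

lemma lambertSeries_zero : lambertSeries 0 = 0 := by
  ext n
  simp [coeff_lambertSeries]

lemma X_pow_dvd_lambertSeries (d : ℕ) : X ^ d ∣ lambertSeries d :=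
  X_pow_dvd_iff.mpr fun m hm ↦ by
    rw [coeff_lambertSeries, if_neg fun h ↦ hm.not_ge (Nat.divisor_le h)]

lemma one_sub_X_pow_mul_geomSeries {d : ℕ} (hd : 0 < d) : (1 - X ^ d) * geomSeries d = 1 := by
  ext n
  rw [sub_mul, one_mul, map_sub, geomSeries, coeff_mk, coeff_X_pow_mul', coeff_mk, coeff_one]
  by_cases hdn : d ≤ n
  · simp [hdn, (Nat.dvd_sub_iff_left hdn dvd_rfl), (hd.trans_le hdn).ne']
  · rcases eq_or_ne n 0 with rfl | hn
    · simp [hd.ne']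
    · simp [hdn, hn, mt (Nat.le_of_dvd (Nat.pos_of_ne_zero hn)) hdn]

lemma one_sub_X_pow_mul_qPochhammerInv (N : ℕ) :
    (1 - X ^ (N + 1)) * qPochhammerInv (N + 1) = qPochhammerInv N := by
  rw [qPochhammerInv, prod_range_succ, mul_left_comm,
    one_sub_X_pow_mul_geomSeries N.succ_pos, mul_one, qPochhammerInv]

lemma tsum_X_pow_mul_eq_geomSeries {d : ℕ} (hd : 0 < d) :
    ∑' j, (X ^ (d * j) : ℤ⟦X⟧) = geomSeries d := by
  have htsum := WithPiTopology.tsum_pow_mul_one_sub_of_constantCoeff_eq_zero (R := ℤ)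
    (f := X ^ d) (by simp [hd.ne'])
  simp only [pow_mul]
  exact left_inv_eq_right_inv htsum (one_sub_X_pow_mul_geomSeries hd)

lemma tendsto_qPochhammerInv : Tendsto qPochhammerInv atTop (𝓝 𝓟) := by
  have h := (Nat.Partition.hasProd_powerSeriesMk_card_restricted ℤ
    fun _ ↦ True).tendsto_prod_nat
  simp only [if_true, tsum_X_pow_mul_eq_geomSeries (Nat.succ_pos _)] at h
  have hcard : 𝓟 = mk fun n ↦ (#(Nat.Partition.restricted n fun _ ↦ True) : ℤ) := by
    ext n
    simp [partitionSeries, Nat.Partition.restricted]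
  exact hcard ▸ h

lemma theta_geomSeries {d : ℕ} (hd : 0 < d) :
    θ (geomSeries d) = d * lambertSeries d * geomSeries d := by
  have hgeom := one_sub_X_pow_mul_geomSeries hd
  have hθ := congrArg theta hgeom
  rw [theta_mul, map_sub, theta_X_pow, theta_one] at hθ
  rw [lambertSeries]
  linear_combination geomSeries d * hθ - (θ (geomSeries d) + d * geomSeries d) * hgeom

lemma theta_qPochhammerInv (N : ℕ) :
    θ (qPochhammerInv N) = (∑ d ∈ range (N + 1), d * lambertSeries d) * qPochhammerInv N := by
  induction N with
  | zero => simp [qPochhammerInv]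
  | succ N ih =>
    rw [qPochhammerInv, prod_range_succ, ← qPochhammerInv, theta_mul, ih,
      theta_geomSeries N.succ_pos, sum_range_succ _ (N + 1)]
    ring

lemma hasSum_lambertSeries (k : ℕ) : HasSum (fun d : ℕ ↦ d ^ k * lambertSeries d) (Φ k) := by
  refine (WithPiTopology.hasSum_iff_hasSum_coeff ℤ).mpr fun n ↦ ?_
  have hcoeff (d : ℕ) : coeff n ((d : ℤ⟦X⟧) ^ k * lambertSeries d) =
      if d ∈ n.divisors then (d : ℤ) ^ k else 0 := by
    rw [← map_natCast (C (R := ℤ)), ← map_pow, coeff_C_mul, coeff_lambertSeries, mul_ite,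
      mul_one, mul_zero]
  have hsigma : coeff n (Φ k) = ∑ d ∈ n.divisors, if d ∈ n.divisors then (d : ℤ) ^ k else 0 := by
    rw [sigmaSeries, coeff_mk, ArithmeticFunction.sigma_apply, Nat.cast_sum]
    exact sum_congr rfl fun d hd ↦ by rw [if_pos hd, Nat.cast_pow]
  simp only [hcoeff, hsigma]
  exact hasSum_sum_of_ne_finset_zero fun d hd ↦ if_neg hd

theorem theta_partitionSeries : θ 𝓟 = Φ 1 * 𝓟 := by
  have hsum := (hasSum_lambertSeries 1).tendsto_sum_nat.comp (tendsto_add_atTop_nat 1)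
  simp only [pow_one] at hsum
  refine tendsto_nhds_unique ((continuous_theta.tendsto _).comp tendsto_qPochhammerInv) ?_
  exact (hsum.mul tendsto_qPochhammerInv).congr fun N ↦ (theta_qPochhammerInv N).symm

end PartitionSeries

/-! ### Reduction modulo a prime -/

section Reduction

instance {R : Type*} [CommRing R] (p : ℕ) [CharP R p] : CharP R⟦X⟧ p :=
  charP_of_injective_ringHom C_injective p

/-- Coefficientwise reduction modulo `p`. -/
def reduceMod (p : ℕ) : ℤ⟦X⟧ →+* (ZMod p)⟦X⟧ := map (Int.castRingHom (ZMod p))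

lemma coeff_reduceMod (p n : ℕ) (f : ℤ⟦X⟧) :
    coeff n (reduceMod p f) = ((coeff n f : ℤ) : ZMod p) :=
  coeff_map ..

lemma reduceMod_X (p : ℕ) : reduceMod p X = X :=
  map_X _

lemma theta_reduceMod (p : ℕ) (f : ℤ⟦X⟧) : θ (reduceMod p f) = reduceMod p (θ f) :=
  theta_map _ f

lemma dvd_coeff_iff {p n : ℕ} {f : ℤ⟦X⟧} :
    (p : ℤ) ∣ coeff n f ↔ coeff n (reduceMod p f) = 0 := by
  rw [coeff_reduceMod, ZMod.intCast_zmod_eq_zero_iff_dvd]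

variable {p : ℕ} [Fact p.Prime]

lemma reduceMod_sigmaSeries_self : reduceMod p (Φ p) = reduceMod p (Φ 1) := by
  ext n
  simp only [coeff_reduceMod, sigmaSeries, coeff_mk, ArithmeticFunction.sigma_apply, pow_one,
    Nat.cast_sum, Nat.cast_pow, Int.cast_sum, Int.cast_pow, ZMod.pow_card]

lemma coeff_reduceMod_sigmaSeries {n j k : ℕ} (hjk : j + k + 1 = p) (hn : ¬ p ∣ n) :
    coeff n (reduceMod p (Φ k)) = coeff n (θ^[k] (reduceMod p (Φ j))) := by
  rw [coeff_theta_iterate]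
  simp only [coeff_reduceMod, sigmaSeries, coeff_mk, ArithmeticFunction.sigma_apply]
  rw [← Nat.sum_div_divisors n (fun d ↦ d ^ j)]
  simp only [Nat.cast_sum, Nat.cast_pow, Int.cast_sum, Int.cast_pow, Int.cast_natCast, mul_sum]
  refine sum_congr rfl fun d hd ↦ ?_
  obtain ⟨e, rfl⟩ := Nat.dvd_of_mem_divisors hd
  have he : (e : ZMod p) ≠ 0 := fun h ↦ hn (((ZMod.natCast_eq_zero_iff e p).mp h).mul_left d)
  have hfermat : (e : ZMod p) ^ k * e ^ j = 1 := by
    rw [← pow_add, show k + j = p - 1 by omega, ZMod.pow_card_sub_one_eq_one he]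
  rw [Nat.mul_div_cancel_left e (Nat.pos_of_mem_divisors hd), Nat.cast_mul, mul_pow, mul_assoc,
    hfermat, mul_one]

lemma coeff_mul_pow_prime (f : (ZMod p)⟦X⟧) (m : ℕ) : coeff (p * m) (f ^ p) = coeff m f := by
  have hp := (Fact.out : p.Prime).ne_zero
  have h : map (RingHom.id (ZMod p)) (expand p hp f) = f ^ p := by
    rw [← ZMod.frobenius_zmod]
    exact MvPowerSeries.map_frobenius_expand p hp
  rw [← h, map_id, id_eq, coeff_expand_mul]

end Reduction

/-! ### The congruence modulo 7 -/

section ModSeven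

instance : Fact (Nat.Prime 7) := ⟨by norm_num⟩

local notation "Q₇" => reduceMod 7 ramanujanQ
local notation "𝓟₇" => reduceMod 7 partitionSeries

lemma reduceMod_ramanujanR : reduceMod 7 ramanujanR = 1 := by
  simp only [ramanujanR, map_sub, map_mul, map_ofNat, map_one]
  grind

lemma ramanujanQ_sq_mod_seven : Q₇ ^ 2 = reduceMod 7 ramanujanP := by
  rw [← map_pow, ramanujanQ_sq, ramanujanP]
  simp only [map_add, map_sub, map_mul, map_ofNat, map_one, reduceMod_sigmaSeries_self]
  grind

lemma sigmaSeries_three_mod_seven : reduceMod 7 (Φ 3) = 4 * (Q₇ - 1) := by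
  simp only [ramanujanQ, map_add, map_mul, map_ofNat, map_one]
  grind

lemma sigmaSeries_one_mod_seven : reduceMod 7 (Φ 1) = 2 * (Q₇ ^ 2 - 1) := by
  simp only [ramanujanQ_sq_mod_seven, ramanujanP, map_sub, map_mul, map_ofNat, map_one]
  grind

lemma theta_ramanujanQ_mod_seven : θ Q₇ = 5 * (Q₇ ^ 3 - 1) := by
  have h := congrArg (reduceMod 7) three_mul_theta_ramanujanQ
  rw [map_mul, map_ofNat, map_sub, map_mul, ← theta_reduceMod, ← ramanujanQ_sq_mod_seven,
    reduceMod_ramanujanR] at h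
  grind

lemma constantCoeff_sigmaSeries (k : ℕ) : constantCoeff (Φ k) = 0 := by
  simp [← coeff_zero_eq_constantCoeff_apply, sigmaSeries]

lemma coeff_one_sigmaSeries (k : ℕ) : coeff 1 (Φ k) = 1 := by
  simp [sigmaSeries]

lemma constantCoeff_partitionSeries : constantCoeff 𝓟 = 1 := by
  simp [← coeff_zero_eq_constantCoeff_apply, partitionSeries]

lemma eq_C_mul_X_of_theta_eq_self {R : Type*} [CommRing R] [IsDomain R] [CharZero R] {f : R⟦X⟧}
    (hf : θ f = f) : f = C (coeff 1 f) * X := by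
  ext n
  rw [coeff_C_mul, coeff_X]
  split_ifs with hn
  · rw [hn, mul_one]
  · have hcoeff : ((n : R) - 1) * coeff n f = 0 := by
      rw [sub_one_mul, ← coeff_theta, hf, sub_self]
    rw [mul_zero]
    exact (mul_eq_zero.mp hcoeff).resolve_left (sub_ne_zero.mpr (Nat.cast_ne_one.mpr hn))

theorem ramanujan_discriminant :
    (ramanujanQ ^ 3 - ramanujanR ^ 2) * 𝓟 ^ 24 = 1728 * X := by
  have hθ : θ (ramanujanQ ^ 3 - ramanujanR ^ 2) =
      ramanujanP * (ramanujanQ ^ 3 - ramanujanR ^ 2) := by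
    rw [map_sub, theta_pow, theta_pow]
    push_cast
    linear_combination ramanujanQ ^ 2 * three_mul_theta_ramanujanQ -
      ramanujanR * two_mul_theta_ramanujanR
  rw [eq_C_mul_X_of_theta_eq_self (f := (ramanujanQ ^ 3 - ramanujanR ^ 2) * 𝓟 ^ 24)]
  · have hcoeff : coeff 1 ((ramanujanQ ^ 3 - ramanujanR ^ 2) * 𝓟 ^ 24) = 1728 := by
      simp only [coeff_one_mul, coeff_one_pow, ramanujanQ_eq, ramanujanR_eq, map_sub, map_add,
        map_mul, map_pow, map_one, constantCoeff_C, coeff_C_mul, coeff_one_sigmaSeries,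
        constantCoeff_partitionSeries, constantCoeff_sigmaSeries]
      norm_num
    rw [hcoeff, map_ofNat]
  · rw [theta_mul, hθ, theta_pow, theta_partitionSeries, ramanujanP]
    push_cast
    ring

lemma X_sq_mul_partitionSeries_mod_seven : X ^ 2 * 𝓟₇ = 𝓟₇ ^ 49 * (Q₇ ^ 3 - 1) ^ 2 := by
  have h := congrArg (reduceMod 7) ramanujan_discriminant
  simp only [map_mul, map_sub, map_pow, map_ofNat, reduceMod_ramanujanR, reduceMod_X] at h
  grind

theorem coeff_partitionSeries_mod_seven {n : ℕ} (hn : n % 7 = 5) : coeff n 𝓟₇ = 0 := by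
  have hprim : (Q₇ ^ 3 - 1) ^ 2 = θ (4 * Q₇ + 6 * Q₇ ^ 4) := by
    simp only [map_add, theta_ofNat_mul, theta_pow, theta_ramanujanQ_mod_seven]
    grind
  have hθ : X ^ 2 * 𝓟₇ = θ (𝓟₇ ^ 49 * (4 * Q₇ + 6 * Q₇ ^ 4)) := by
    rw [X_sq_mul_partitionSeries_mod_seven, hprim, theta_mul (_ ^ 49),
      theta_pow_eq_zero (p := 7) (by norm_num), zero_mul, zero_add]
  rw [← coeff_X_pow_mul 𝓟₇ 2 n, hθ, coeff_theta_eq_zero (p := 7) (by omega)]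

lemma theta_iterate_five_sigmaSeries_one :
    θ^[5] (reduceMod 7 (Φ 1)) =
      3 + 5 * Q₇ ^ 3 + 6 * Q₇ ^ 6 + 4 * Q₇ ^ 9 + 3 * Q₇ ^ 12 := by
  have hθ₁ : θ (reduceMod 7 (Φ 1)) = Q₇ + 6 * Q₇ ^ 4 := by
    rw [sigmaSeries_one_mod_seven]
    simp only [map_sub, theta_ofNat_mul, theta_pow, theta_ramanujanQ_mod_seven,
      Derivation.map_one_eq_zero]
    grind
  have hθ₂ : θ (Q₇ + 6 * Q₇ ^ 4) = 2 + 4 * Q₇ ^ 3 + Q₇ ^ 6 := by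
    simp only [map_add, theta_ofNat_mul, theta_pow, theta_ramanujanQ_mod_seven]
    grind
  have hθ₃ : θ (2 + 4 * Q₇ ^ 3 + Q₇ ^ 6) = 3 * Q₇ ^ 2 + 2 * Q₇ ^ 5 + 2 * Q₇ ^ 8 := by
    simp only [map_add, theta_ofNat, theta_ofNat_mul, theta_pow, theta_ramanujanQ_mod_seven]
    grind
  have hθ₄ : θ (3 * Q₇ ^ 2 + 2 * Q₇ ^ 5 + 2 * Q₇ ^ 8) =
      5 * Q₇ + Q₇ ^ 4 + 5 * Q₇ ^ 7 + 3 * Q₇ ^ 10 := by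
    simp only [map_add, theta_ofNat_mul, theta_pow, theta_ramanujanQ_mod_seven]
    grind
  have hθ₅ : θ (5 * Q₇ + Q₇ ^ 4 + 5 * Q₇ ^ 7 + 3 * Q₇ ^ 10) =
      3 + 5 * Q₇ ^ 3 + 6 * Q₇ ^ 6 + 4 * Q₇ ^ 9 + 3 * Q₇ ^ 12 := by
    simp only [map_add, theta_ofNat_mul, theta_pow, theta_ramanujanQ_mod_seven]
    grind
  simp only [Function.iterate_succ, Function.iterate_zero, Function.comp_apply, id_eq, hθ₁,
    hθ₂, hθ₃, hθ₄, hθ₅]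

lemma coeff_partitionSeries_mul_sigmaSeries_five {n : ℕ} (hn : n % 7 = 5) :
    coeff n (𝓟₇ * reduceMod 7 (Φ 5)) = coeff n (𝓟₇ * θ^[5] (reduceMod 7 (Φ 1))) := by
  rw [coeff_mul, coeff_mul]
  refine sum_congr rfl fun ij hij ↦ ?_
  have hij' := mem_antidiagonal.mp hij
  by_cases h : 7 ∣ ij.2
  · rw [coeff_partitionSeries_mod_seven (by omega), zero_mul, zero_mul]
  · rw [coeff_reduceMod_sigmaSeries (p := 7) (j := 1) rfl h]

/-- The combination of divisor sum series whose product with `∑ p(n) qⁿ` has coefficients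
divisible by `7` along `49 k + 47`. -/
def quasimodularForm : ℤ⟦X⟧ :=
  3 * Φ 5 + Φ 3 ^ 2 + Φ 1 ^ 2 * Φ 3 + 3 * Φ 1 ^ 4 + Φ 1 * Φ 3 - Φ 1 ^ 3

-- Multiplied by `(Q³ - 1)²`, the polynomial in `Q` on the left is a derivative up to the multiple
-- `5 (Q³ - 1)⁷` of a seventh power, because `θ Q` is a polynomial in `Q`.
lemma X_sq_mul_partitionSeries_mul_eq_theta_add_pow :
    X ^ 2 * (𝓟₇ * (3 * θ^[5] (reduceMod 7 (Φ 1)) + reduceMod 7 (quasimodularForm - 3 * Φ 5))) =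
      θ (𝓟₇ ^ 49 * (4 * Q₇ + Q₇ ^ 2 + Q₇ ^ 3 + 4 * Q₇ ^ 5 + 2 * Q₇ ^ 6 + 6 * Q₇ ^ 8 + Q₇ ^ 9
        + 4 * Q₇ ^ 10 + 5 * Q₇ ^ 12 + 6 * Q₇ ^ 13 + 6 * Q₇ ^ 16 + 4 * Q₇ ^ 19))
      + 5 * θ (𝓟₇ ^ 7 * (3 * Q₇)) ^ 7 := by
  rw [theta_mul (_ ^ 49), theta_pow_eq_zero (p := 7) (by norm_num), theta_mul (_ ^ 7),
    theta_pow_eq_zero (p := 7) dvd_rfl, theta_iterate_five_sigmaSeries_one, quasimodularForm]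
  simp only [map_add, map_sub, map_mul, map_pow, map_ofNat, theta_ofNat_mul, theta_pow,
    theta_ramanujanQ_mod_seven, sigmaSeries_three_mod_seven, sigmaSeries_one_mod_seven]
  rw [← mul_assoc, X_sq_mul_partitionSeries_mod_seven]
  grind

theorem seven_dvd_coeff_partitionSeries_mul_quasimodularForm (k : ℕ) :
    (7 : ℤ) ∣ coeff (49 * k + 47) (𝓟 * quasimodularForm) := by
  have hsplit : reduceMod 7 (𝓟 * quasimodularForm) = C 3 * (𝓟₇ * reduceMod 7 (Φ 5)) +
      𝓟₇ * reduceMod 7 (quasimodularForm - 3 * Φ 5) := by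
    simp only [map_mul, map_sub, map_ofNat]
    ring
  have hC5 : (5 : (ZMod 7)⟦X⟧) = C 5 := (map_ofNat C 5).symm
  rw [show (7 : ℤ) = (7 : ℕ) from rfl, dvd_coeff_iff, hsplit, map_add, coeff_C_mul,
    coeff_partitionSeries_mul_sigmaSeries_five (by omega), ← coeff_C_mul, ← map_add, map_ofNat,
    mul_left_comm, ← mul_add, ← coeff_X_pow_mul _ 2,
    X_sq_mul_partitionSeries_mul_eq_theta_add_pow, map_add, hC5, coeff_C_mul,
    coeff_theta_eq_zero (p := 7) (by omega), show 49 * k + 47 + 2 = 7 * (7 * (k + 1)) by omega,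
    coeff_mul_pow_prime, coeff_theta_eq_zero (p := 7) (dvd_mul_right _ _), mul_zero, add_zero]

end ModSeven

lemma coeff_ofNat_mul (n k : ℕ) [k.AtLeastTwo] (f : ℤ⟦X⟧) :
    coeff n (ofNat(k) * f) = ofNat(k) * coeff n f := by
  rw [← map_ofNat C k, coeff_C_mul]

-- The operator `24 θ - 1` multiplies the coefficient of `q ^ (49 k + 47)` by a multiple of `49`.
lemma fortyNine_dvd_coeff_partitionSeries_mul_theta_ramanujanR (k : ℕ) :
    (49 : ℤ) ∣ coeff (49 * k + 47) (𝓟 * (-1 - 264 * Φ 1 - 5544 * Φ 5 + 133056 * (Φ 1 * Φ 5)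
      - 5760 * Φ 7)) := by
  have h : 𝓟 * (-1 - 264 * Φ 1 - 5544 * Φ 5 + 133056 * (Φ 1 * Φ 5) - 5760 * Φ 7) =
      24 * θ (𝓟 * ramanujanR) - 𝓟 * ramanujanR := by
    have hR := two_mul_theta_ramanujanR
    rw [ramanujanQ_sq, ramanujanP] at hR
    rw [theta_mul, theta_partitionSeries, ramanujanR] at *
    linear_combination -12 * 𝓟 * hR
  rw [h, map_sub, coeff_ofNat_mul, coeff_theta]
  exact ⟨(24 * k + 23) * coeff (49 * k + 47) (𝓟 * ramanujanR), by push_cast; ring⟩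

/-! ### Dyson's bijection -/

section DysonBijection

/-- The parts of a partition, given as a multiset, after deleting the first column of its Ferrers
diagram. -/
def removeColumn (M : Multiset ℕ) : Multiset ℕ := (M.map Nat.pred).filter (· ≠ 0)

/-- The parts of a partition after prepending a column of length `c` to its Ferrers diagram,
provided that there are at most `c` parts. -/
def addColumn (c : ℕ) (M : Multiset ℕ) : Multiset ℕ :=
  M.map Nat.succ + Multiset.replicate (c - M.card) 1

/-- The parts of a partition after deleting its largest part. -/
def removeLargest (M : Multiset ℕ) : Multiset ℕ := M.erase M.sup

/-- The parts of a partition after adding a part of size `t`, where a part of size `0` is not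
recorded. -/
def addPart (t : ℕ) (M : Multiset ℕ) : Multiset ℕ := if t = 0 then M else t ::ₘ M

variable {M : Multiset ℕ} {c t : ℕ}

lemma zero_notMem_removeColumn (M : Multiset ℕ) : 0 ∉ removeColumn M := by
  simp [removeColumn]

lemma zero_notMem_addColumn (c : ℕ) (M : Multiset ℕ) : 0 ∉ addColumn c M := by
  simp [addColumn, Multiset.mem_replicate]

lemma zero_notMem_removeLargest (hM : 0 ∉ M) : 0 ∉ removeLargest M :=
  fun h ↦ hM (Multiset.mem_of_mem_erase h)

lemma zero_notMem_addPart (t : ℕ) (hM : 0 ∉ M) : 0 ∉ addPart t M := by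
  rw [addPart]
  split_ifs with ht
  · exact hM
  · simp [hM, Ne.symm ht]

lemma removeColumn_cons (a : ℕ) (M : Multiset ℕ) :
    removeColumn (a ::ₘ M) = addPart (a - 1) (removeColumn M) := by
  rw [removeColumn, removeColumn, Multiset.map_cons, Nat.pred_eq_sub_one, addPart]
  split_ifs with ha
  · exact Multiset.filter_cons_of_neg _ (not_not.mpr ha)
  · exact Multiset.filter_cons_of_pos _ ha

lemma card_addPart_le (t : ℕ) (M : Multiset ℕ) : (addPart t M).card ≤ M.card + 1 := by
  rw [addPart]
  split_ifs <;> simp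

lemma sum_addPart (t : ℕ) (M : Multiset ℕ) : (addPart t M).sum = t + M.sum := by
  rw [addPart]
  split_ifs with ht
  · rw [ht, zero_add]
  · rw [Multiset.sum_cons]

lemma sup_addPart (t : ℕ) (M : Multiset ℕ) : (addPart t M).sup = max t M.sup := by
  rw [addPart]
  split_ifs with ht
  · rw [ht, max_eq_right (Nat.zero_le _)]
  · rw [Multiset.sup_cons]

lemma card_removeColumn_le (M : Multiset ℕ) : (removeColumn M).card ≤ M.card :=
  (Multiset.card_le_card (Multiset.filter_le _ _)).trans_eq (Multiset.card_map _ _)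

lemma sup_removeColumn (M : Multiset ℕ) : (removeColumn M).sup = M.sup - 1 := by
  induction M using Multiset.induction with
  | empty => simp [removeColumn]
  | cons a M ih => rw [removeColumn_cons, sup_addPart, ih, Multiset.sup_cons]; omega

lemma addColumn_removeColumn (hM : 0 ∉ M) : addColumn M.card (removeColumn M) = M := by
  induction M using Multiset.induction with
  | empty => simp [removeColumn, addColumn]
  | cons a M ih =>
    obtain ⟨ha, hM⟩ : 0 ≠ a ∧ 0 ∉ M := by simpa using hM
    have hcard := card_removeColumn_le M
    specialize ih hM
    rw [addColumn] at ih ⊢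
    rw [removeColumn_cons, addPart, Multiset.card_cons]
    split_ifs with ha'
    · rw [Nat.succ_sub hcard, Multiset.replicate_succ, Multiset.add_cons, ih,
        show a = 1 by omega]
    · rw [Multiset.map_cons, Multiset.card_cons, Nat.add_sub_add_right, Multiset.cons_add, ih,
        show (a - 1).succ = a by omega]

lemma removeColumn_addColumn (c : ℕ) (hM : 0 ∉ M) : removeColumn (addColumn c M) = M := by
  have hpred : M.map (Nat.pred ∘ Nat.succ) = M := Multiset.map_id M
  rw [removeColumn, addColumn, Multiset.map_add, Multiset.map_map, hpred, Multiset.map_replicate,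
    Multiset.filter_add, Multiset.filter_eq_self.mpr fun x hx ↦ ne_of_mem_of_not_mem hx hM,
    Nat.pred_succ,
    Multiset.filter_eq_nil.mpr fun x hx ↦ not_not.mpr (Multiset.eq_of_mem_replicate hx), add_zero]

lemma card_addColumn (hc : M.card ≤ c) : (addColumn c M).card = c := by
  rw [addColumn, Multiset.card_add, Multiset.card_map, Multiset.card_replicate,
    Nat.add_sub_cancel' hc]

lemma sum_addColumn (hc : M.card ≤ c) : (addColumn c M).sum = M.sum + c := by
  have hsucc : (M.map Nat.succ).sum = M.sum + M.card := by
    simp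
  rw [addColumn, Multiset.sum_add, hsucc, Multiset.sum_replicate, smul_eq_mul]
  omega

lemma sup_mem (hM : M ≠ 0) : M.sup ∈ M := by
  induction M using Multiset.induction with
  | empty => exact absurd rfl hM
  | cons a M ih =>
    rcases eq_or_ne M 0 with rfl | hM
    · simp
    · rcases max_choice a M.sup with h | h <;> rw [Multiset.sup_cons, h]
      exacts [Multiset.mem_cons_self _ _, Multiset.mem_cons_of_mem (ih hM)]

lemma card_removeLargest (M : Multiset ℕ) : (removeLargest M).card = M.card - 1 := by
  rcases eq_or_ne M 0 with rfl | hM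
  · rfl
  · exact Multiset.card_erase_of_mem (sup_mem hM)

lemma sup_removeLargest_le (M : Multiset ℕ) : (removeLargest M).sup ≤ M.sup :=
  Multiset.sup_mono (Multiset.erase_subset _ _)

lemma addPart_removeLargest (hM : 0 ∉ M) : addPart M.sup (removeLargest M) = M := by
  rcases eq_or_ne M 0 with rfl | hM'
  · rfl
  · have hsup : M.sup ≠ 0 := fun h ↦ hM (h ▸ sup_mem hM')
    rw [addPart, if_neg hsup, removeLargest, Multiset.cons_erase (sup_mem hM')]

lemma removeLargest_addPart (hM : 0 ∉ M) (ht : M.sup ≤ t) : removeLargest (addPart t M) = M := by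
  rw [removeLargest, sup_addPart, max_eq_left ht, addPart]
  split_ifs with ht0
  · exact Multiset.erase_of_notMem (ht0 ▸ hM)
  · exact Multiset.erase_cons_head t M

/-- Dyson's map: delete the first column of a partition with `c` parts and add a part of size
`c + r`. -/
def dysonMap (r : ℤ) (M : Multiset ℕ) : Multiset ℕ :=
  addPart ((M.card : ℤ) + r).toNat (removeColumn M)

/-- The inverse of Dyson's map: delete the largest part `t` and prepend a column of length
`t - r`. -/
def dysonInv (r : ℤ) (M : Multiset ℕ) : Multiset ℕ :=
  addColumn ((M.sup : ℤ) - r).toNat (removeLargest M)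

variable {r : ℤ}

lemma sup_dysonMap (hrank : (M.sup : ℤ) ≤ M.card + r + 1) :
    (dysonMap r M).sup = ((M.card : ℤ) + r).toNat := by
  rw [dysonMap, sup_addPart, sup_removeColumn, max_eq_left (by omega)]

lemma card_dysonMap_le (r : ℤ) (M : Multiset ℕ) : (dysonMap r M).card ≤ M.card + 1 :=
  (card_addPart_le _ _).trans (Nat.add_le_add_right (card_removeColumn_le M) 1)

lemma sum_dysonMap (hM : 0 ∉ M) (hr : 0 ≤ M.card + r) : ((dysonMap r M).sum : ℤ) = M.sum + r := by
  have hsum := sum_addColumn (card_removeColumn_le M)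
  rw [addColumn_removeColumn hM] at hsum
  rw [dysonMap, sum_addPart]
  omega

lemma dysonInv_dysonMap (hM : 0 ∉ M) (hr : 0 ≤ M.card + r)
    (hrank : (M.sup : ℤ) ≤ M.card + r + 1) : dysonInv r (dysonMap r M) = M := by
  have hcard : ((((M.card : ℤ) + r).toNat : ℤ) - r).toNat = M.card := by omega
  have hsup : (removeColumn M).sup ≤ ((M.card : ℤ) + r).toNat := by
    rw [sup_removeColumn]
    omega
  rw [dysonInv, sup_dysonMap hrank, hcard, dysonMap,
    removeLargest_addPart (zero_notMem_removeColumn M) hsup, addColumn_removeColumn hM]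

lemma card_dysonInv (hrank : ((M.card - 1 : ℕ) : ℤ) ≤ M.sup - r) :
    (dysonInv r M).card = ((M.sup : ℤ) - r).toNat :=
  card_addColumn (by rw [card_removeLargest]; omega)

lemma sup_dysonInv_le (r : ℤ) (hM : 0 ∉ M) : (dysonInv r M).sup ≤ M.sup + 1 := by
  have hsup := sup_removeColumn (dysonInv r M)
  rw [dysonInv, removeColumn_addColumn _ (zero_notMem_removeLargest hM)] at hsup
  have hle := sup_removeLargest_le M
  rw [dysonInv]
  omega

lemma dysonMap_dysonInv (hM : 0 ∉ M) (hrank : ((M.card - 1 : ℕ) : ℤ) ≤ M.sup - r) :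
    dysonMap r (dysonInv r M) = M := by
  have hsup : ((((M.sup : ℤ) - r).toNat : ℤ) + r).toNat = M.sup := by omega
  rw [dysonMap, card_dysonInv hrank, hsup, dysonInv,
    removeColumn_addColumn _ (zero_notMem_removeLargest hM), addPart_removeLargest hM]

lemma sum_dysonInv (hM : 0 ∉ M) (hrank : ((M.card - 1 : ℕ) : ℤ) ≤ M.sup - r) :
    ((dysonInv r M).sum : ℤ) = M.sum - r := by
  have hsum := sum_dysonMap (r := r) (zero_notMem_addColumn _ (removeLargest M))
    (by rw [← dysonInv, card_dysonInv hrank]; omega)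
  rw [← dysonInv, dysonMap_dysonInv hM hrank] at hsum
  omega

/-- The number of partitions of `n` whose rank satisfies `p`. -/
def countRank (n : ℕ) (p : ℤ → Prop) [DecidablePred p] : ℕ :=
  #{P : n.Partition | p (partitionRank P)}

lemma zero_notMem_parts {n : ℕ} (P : n.Partition) : 0 ∉ P.parts :=
  fun h ↦ (P.parts_pos h).false

lemma card_parts_add_nonneg {n : ℕ} (hn : 0 ≤ (n : ℤ) + r) (P : n.Partition)
    (hP : partitionRank P ≤ r + 1) : 0 ≤ P.parts.card + r := by
  rcases eq_or_ne P.parts 0 with h | h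
  · have hsum := P.parts_sum
    rw [h, Multiset.sum_zero] at hsum
    omega
  · have := P.parts_pos (sup_mem h)
    rw [partitionRank] at hP
    omega

lemma card_parts_sub_one_le {n : ℕ} (hn : r ≤ n) (P : n.Partition)
    (hP : r - 1 ≤ partitionRank P) : ((P.parts.card - 1 : ℕ) : ℤ) ≤ P.parts.sup - r := by
  rcases eq_or_ne P.parts 0 with h | h
  · have hsum := P.parts_sum
    rw [h, Multiset.sum_zero] at hsum
    rw [h, Multiset.card_zero, Multiset.sup_zero, Nat.bot_eq_zero]
    omega
  · have := Multiset.card_pos.mpr h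
    rw [partitionRank] at hP
    omega

theorem countRank_le_eq_countRank_ge {n n' : ℕ} (hn : (n' : ℤ) = n + r) :
    countRank n (· ≤ r + 1) = countRank n' (r - 1 ≤ ·) := by
  have hmap (P : n.Partition) (hP : partitionRank P ≤ r + 1) :=
    card_parts_add_nonneg (r := r) (by omega) P hP
  have hinv (P : n'.Partition) (hP : r - 1 ≤ partitionRank P) :=
    card_parts_sub_one_le (r := r) (by omega) P hP
  refine card_bij'
    (fun P hP ↦ ⟨dysonMap r P.parts, fun {i} hi ↦ Nat.pos_of_ne_zero (ne_of_mem_of_not_mem hi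
      (zero_notMem_addPart _ (zero_notMem_removeColumn _))), ?_⟩)
    (fun P hP ↦ ⟨dysonInv r P.parts, fun {i} hi ↦ Nat.pos_of_ne_zero (ne_of_mem_of_not_mem hi
      (zero_notMem_addColumn _ _)), ?_⟩) ?_ ?_ ?_ ?_
  · have h := sum_dysonMap (zero_notMem_parts P) (hmap P (by simpa using hP))
    rw [P.parts_sum] at h
    omega
  · have h := sum_dysonInv (zero_notMem_parts P) (hinv P (by simpa using hP))
    rw [P.parts_sum] at h
    omega
  · simp only [mem_filter_univ]
    intro P hP
    have := hmap P hP
    simp only [partitionRank] at hP ⊢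
    have := card_dysonMap_le r P.parts
    rw [sup_dysonMap (by omega)]
    omega
  · simp only [mem_filter_univ]
    intro P hP
    have := hinv P hP
    simp only [partitionRank] at hP ⊢
    have := sup_dysonInv_le r (zero_notMem_parts P)
    rw [card_dysonInv (hinv P hP)]
    omega
  · simp only [mem_filter_univ]
    intro P hP
    refine Nat.Partition.ext (dysonInv_dysonMap (zero_notMem_parts P) (hmap P hP) ?_)
    rw [partitionRank] at hP
    omega
  · simp only [mem_filter_univ]
    intro P hP
    exact Nat.Partition.ext (dysonMap_dysonInv (zero_notMem_parts P) (hinv P hP))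

end DysonBijection

/-! ### Generating functions of ranks -/

section RankSeries

lemma abs_partitionRank_lt {n : ℕ} (hn : 0 < n) (P : n.Partition) : |partitionRank P| < n := by
  have hne : P.parts ≠ 0 := fun h ↦ by simpa [h, hn.ne] using P.parts_sum
  have hcard_pos := Multiset.card_pos.mpr hne
  have hsup_pos := P.parts_pos (sup_mem hne)
  have hsup_le := Multiset.single_le_sum (fun x _ ↦ Nat.zero_le x) _ (sup_mem hne)
  have hcard_le := Multiset.card_nsmul_le_sum (s := P.parts) (a := 1) fun x hx ↦ P.parts_pos hx
  rw [P.parts_sum] at hsup_le hcard_le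
  rw [smul_eq_mul, mul_one] at hcard_le
  rw [partitionRank, abs_lt]
  omega

lemma abs_partitionRank_le {n : ℕ} (P : n.Partition) : |partitionRank P| ≤ n := by
  rcases n.eq_zero_or_pos with rfl | hn
  · simp [partitionRank]
  · exact (abs_partitionRank_lt hn P).le

lemma countRank_congr {p q : ℤ → Prop} [DecidablePred p] [DecidablePred q] (n : ℕ)
    (h : ∀ x, p x ↔ q x) : countRank n p = countRank n q := by
  simp only [countRank, h]

lemma countRank_add_countRank_not (n : ℕ) (p : ℤ → Prop) [DecidablePred p] :
    countRank n p + countRank n (¬ p ·) = Fintype.card n.Partition :=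
  card_filter_add_card_filter_not (s := univ) fun P : n.Partition ↦ p (partitionRank P)

lemma natCast_countRank (n : ℕ) (p : ℤ → Prop) [DecidablePred p] :
    (countRank n p : ℤ) = ∑ P : n.Partition, if p (partitionRank P) then 1 else 0 := by
  rw [countRank, sum_boole]

/-- The generating function of the number of partitions of rank at least `s`. -/
def rankGeSeries (s : ℕ) : ℤ⟦X⟧ := mk fun n ↦ (countRank n ((s : ℤ) ≤ ·) : ℤ)

/-- The generating function of the number of partitions of rank at most `-s`. -/
def rankLeNegSeries (s : ℕ) : ℤ⟦X⟧ := mk fun n ↦ (countRank n (· ≤ -(s : ℤ)) : ℤ)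

lemma countRank_eq_zero {n s : ℕ} {p : ℤ → Prop} [DecidablePred p] (hs : 1 ≤ s) (hn : n ≤ s)
    (hp : ∀ x, p x → s ≤ |x|) : countRank n p = 0 := by
  rw [countRank, card_eq_zero, filter_eq_empty_iff]
  intro P _ hP
  have hle := (hp _ hP).trans (abs_partitionRank_le P)
  have hlt := (hp _ hP).trans_lt (abs_partitionRank_lt (by omega) P)
  omega

lemma rankGeSeries_eq {s : ℕ} (hs : 1 ≤ s) :
    rankGeSeries s = X ^ (s + 1) * (𝓟 - rankGeSeries (s + 3)) := by
  ext n
  rw [coeff_X_pow_mul', rankGeSeries, coeff_mk]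
  split_ifs with hn
  · have hdyson : countRank (n - (s + 1)) (· ≤ (s + 1 : ℤ) + 1) = countRank n ((s : ℤ) ≤ ·) := by
      rw [countRank_le_eq_countRank_ge (n' := n) (by omega)]
      exact countRank_congr _ fun x ↦ by omega
    have hcompl := countRank_add_countRank_not (n - (s + 1)) (· ≤ (s + 1 : ℤ) + 1)
    have hnot : countRank (n - (s + 1)) (¬ · ≤ (s + 1 : ℤ) + 1) =
        countRank (n - (s + 1)) (((s + 3 : ℕ) : ℤ) ≤ ·) := countRank_congr _ fun x ↦ by omega
    rw [map_sub, partitionSeries, rankGeSeries, coeff_mk, coeff_mk, ← hcompl, ← hdyson, hnot,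
      Nat.cast_add, add_sub_cancel_right]
  · rw [countRank_eq_zero hs (by omega) fun x hx ↦ hx.trans (le_abs_self x), Nat.cast_zero]

lemma rankLeNegSeries_eq {s : ℕ} (hs : 1 ≤ s) :
    rankLeNegSeries s = X ^ (s + 1) * (𝓟 - rankLeNegSeries (s + 3)) := by
  ext n
  rw [coeff_X_pow_mul', rankLeNegSeries, coeff_mk]
  split_ifs with hn
  · have hdyson : countRank n (· ≤ -(s : ℤ)) = countRank (n - (s + 1)) (-(s + 1 : ℤ) - 1 ≤ ·) := by
      rw [← countRank_le_eq_countRank_ge (n := n) (by omega)]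
      exact countRank_congr _ fun x ↦ by omega
    have hcompl := countRank_add_countRank_not (n - (s + 1)) (-(s + 1 : ℤ) - 1 ≤ ·)
    have hnot : countRank (n - (s + 1)) (¬ -(s + 1 : ℤ) - 1 ≤ ·) =
        countRank (n - (s + 1)) (· ≤ -((s + 3 : ℕ) : ℤ)) := countRank_congr _ fun x ↦ by omega
    rw [map_sub, partitionSeries, rankLeNegSeries, coeff_mk, coeff_mk, ← hcompl, hdyson, hnot,
      Nat.cast_add, add_sub_cancel_right]
  · rw [countRank_eq_zero hs (by omega) fun x hx ↦ (le_neg_of_le_neg hx).trans (neg_le_abs x),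
      Nat.cast_zero]

lemma eq_zero_of_eq_neg_X_pow_mul {R : Type*} [Ring R] {A : ℕ → R⟦X⟧} {d : ℕ}
    (hA : ∀ s, 1 ≤ s → A s = -X ^ (s + 1) * A (s + d)) {s : ℕ} (hs : 1 ≤ s) : A s = 0 := by
  ext n
  rw [map_zero]
  induction n using Nat.strong_induction_on generalizing s with
  | _ n ih =>
    rw [hA s hs, neg_mul, map_neg, coeff_X_pow_mul', neg_eq_zero]
    split_ifs with hn
    · exact ih _ (by omega) (by omega)
    · rfl

theorem rankLeNegSeries_eq_rankGeSeries {s : ℕ} (hs : 1 ≤ s) :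
    rankLeNegSeries s = rankGeSeries s := by
  refine sub_eq_zero.mp (eq_zero_of_eq_neg_X_pow_mul
    (A := fun s ↦ rankLeNegSeries s - rankGeSeries s) (d := 3) (fun s hs ↦ ?_) hs)
  simp only [rankLeNegSeries_eq hs, rankGeSeries_eq hs]
  ring

end RankSeries

/-! ### The sixth rank moment modulo 7 -/

section EtaModSeven

lemma ite_emod_seven_eq_four {n : ℕ} {x : ℤ} (hx : |x| ≤ n) : (if x % 7 = 4 then (1 : ℤ) else 0) =
    ∑ i ∈ range (n + 1), (((if ((7 * i + 4 : ℕ) : ℤ) ≤ x then 1 else 0) -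
        (if ((7 * i + 5 : ℕ) : ℤ) ≤ x then 1 else 0)) +
      ((if x ≤ -((7 * i + 3 : ℕ) : ℤ) then 1 else 0) -
        (if x ≤ -((7 * i + 4 : ℕ) : ℤ) then 1 else 0))) := by
  obtain ⟨hlow, hup⟩ := abs_le.mp hx
  set j : ℕ := (if 0 ≤ x then x / 7 else -(x / 7) - 1).toNat with hj
  have hjn : j ∈ range (n + 1) := by
    rw [mem_range, hj]
    split_ifs <;> omega
  rw [← sum_ite_eq_of_mem' (range (n + 1)) j (fun _ ↦ if x % 7 = 4 then (1 : ℤ) else 0) hjn]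
  refine sum_congr rfl fun i _ ↦ ?_
  split_ifs <;> omega

theorem countRank_emod_seven_eq_four (n : ℕ) : (countRank n (· % 7 = 4) : ℤ) =
    coeff n (∑ i ∈ range (n + 1), (rankGeSeries (7 * i + 3) - rankGeSeries (7 * i + 5))) := by
  have hsplit (i : ℕ) : rankGeSeries (7 * i + 3) - rankGeSeries (7 * i + 5) =
      (rankGeSeries (7 * i + 4) - rankGeSeries (7 * i + 5)) +
      (rankLeNegSeries (7 * i + 3) - rankLeNegSeries (7 * i + 4)) := by
    rw [rankLeNegSeries_eq_rankGeSeries (by omega), rankLeNegSeries_eq_rankGeSeries (by omega)]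
    ring
  rw [sum_congr rfl fun i _ ↦ hsplit i]
  simp only [map_sum, map_add, map_sub, rankGeSeries, rankLeNegSeries, coeff_mk,
    natCast_countRank, ← sum_sub_distrib, ← sum_add_distrib]
  rw [sum_comm]
  exact sum_congr rfl fun P _ ↦ ite_emod_seven_eq_four (abs_partitionRank_le P)

lemma factorial_mul_intChoose (x : ℤ) (k : ℕ) :
    (k.factorial : ℤ) * intChoose x k = ∏ i ∈ range k, (x - i) := by
  refine Int.mul_ediv_cancel' ?_
  rw [← descPochhammer_eval_eq_prod_range, Polynomial.eval_eq_smeval,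
    Ring.descPochhammer_eq_factorial_smul_choose, nsmul_eq_mul]
  exact dvd_mul_right _ _

lemma intChoose_add_two_six_modEq (m : ℤ) :
    intChoose (m + 2) 6 ≡ if m % 7 = 4 then 1 else 0 [ZMOD 7] := by
  have hmul := congrArg (Int.cast : ℤ → ZMod 7) (factorial_mul_intChoose (m + 2) 6)
  simp only [prod_range_succ, prod_range_zero] at hmul
  push_cast at hmul
  have hsolve : ∀ a c : ZMod 7, (Nat.factorial 6 : ZMod 7) * c = 1 * (a + 2 - 0) * (a + 2 - 1) *
      (a + 2 - 2) * (a + 2 - 3) * (a + 2 - 4) * (a + 2 - 5) → c = if a = 4 then 1 else 0 := by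
    decide
  have hmod : (m : ZMod 7) = 4 ↔ m % 7 = 4 := by
    exact_mod_cast ZMod.intCast_eq_intCast_iff m 4 7
  refine (ZMod.intCast_eq_intCast_iff _ _ 7).mp ?_
  rw [hsolve _ _ hmul]
  simp only [hmod]
  split_ifs <;> simp

lemma eta6_eq_sum (n : ℕ) : eta6 n = ∑ P : n.Partition, intChoose (partitionRank P + 2) 6 := by
  classical
  have hcount (m : ℤ) : rankCount m n = #{P : n.Partition | partitionRank P = m} := by
    rw [rankCount, Nat.card_eq_fintype_card, Fintype.card_subtype]
  rw [sum_comp (fun m ↦ intChoose (m + 2) 6) partitionRank, eta6]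
  simp only [hcount, nsmul_eq_mul, mul_comm]
  refine finsum_eq_sum_of_support_subset _ fun m hm ↦ ?_
  have hne : #{P : n.Partition | partitionRank P = m} ≠ 0 := fun h ↦ hm (by simp [h])
  obtain ⟨P, hP⟩ := card_ne_zero.mp hne
  exact mem_coe.mpr (mem_image.mpr ⟨P, mem_univ _, (mem_filter.mp hP).2⟩)

theorem eta6_modEq_countRank (n : ℕ) : eta6 n ≡ countRank n (· % 7 = 4) [ZMOD 7] := by
  rw [eta6_eq_sum, natCast_countRank]
  exact Int.ModEq.sum fun P _ ↦ intChoose_add_two_six_modEq _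

end EtaModSeven

/-! ### The cube of Euler's series -/

section EulerSeries

open Filter (tendsto_add_atTop_nat)

/-- Euler's series `1 / (z; q)_∞ = ∑ z ^ j / (q; q)_j`, as a power series in `z` over the ring of
power series in `q`. The substitution `z ↦ z q` is `rescale X`. -/
def eulerSeries : ℤ⟦X⟧⟦X⟧ := mk qPochhammerInv

/-- The coefficient of `z ^ j` in `1 / (z; q)_∞ ^ 3`. -/
def cubeCoeff (j : ℕ) : ℤ⟦X⟧ := coeff j (eulerSeries ^ 3)

/-- The coefficient of `z ^ j` in `1 / (z q; q)_∞ ^ 3`. -/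
def weight (j : ℕ) : ℤ⟦X⟧ := X ^ j * cubeCoeff j

lemma coeff_rescale_eulerSeries_pow (j : ℕ) :
    coeff j (rescale (X : ℤ⟦X⟧) eulerSeries ^ 3) = weight j := by
  rw [← map_pow, coeff_rescale, weight, cubeCoeff]

lemma X_pow_dvd_weight (j : ℕ) : X ^ j ∣ weight j :=
  dvd_mul_right _ _

lemma rescale_eulerSeries : rescale (X : ℤ⟦X⟧) eulerSeries = (1 - X) * eulerSeries := by
  ext1 j
  rw [coeff_rescale, sub_mul, one_mul, map_sub, eulerSeries, coeff_mk]
  cases j with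
  | zero => simp
  | succ j =>
    rw [coeff_succ_X_mul, coeff_mk]
    linear_combination -one_sub_X_pow_mul_qPochhammerInv j

lemma cubeCoeff_eq_sum (j : ℕ) :
    cubeCoeff j = ∑ p ∈ antidiagonal j, (2 + p.1).choose 2 * weight p.2 := by
  have hmk := mk_add_choose_mul_one_sub_pow_eq_one ℤ⟦X⟧ 2
  have hcube : eulerSeries ^ 3 =
      (mk fun n ↦ ((2 + n).choose 2 : ℤ⟦X⟧)) * rescale (X : ℤ⟦X⟧) eulerSeries ^ 3 := by
    rw [rescale_eulerSeries]
    linear_combination -eulerSeries ^ 3 * hmk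
  simp only [cubeCoeff, hcube, coeff_mul, coeff_mk, coeff_rescale_eulerSeries_pow]

lemma tsum_coeff_rescale_eulerSeries :
    ∑' i, coeff i (rescale (X : ℤ⟦X⟧) eulerSeries) = 𝓟 := by
  have hpartial (N : ℕ) : ∑ i ∈ range (N + 1), coeff i (rescale (X : ℤ⟦X⟧) eulerSeries) =
      qPochhammerInv N := by
    rw [rescale_eulerSeries, sub_mul, one_mul]
    simp only [map_sub, sum_sub_distrib]
    rw [sum_range_succ, sum_range_succ' (fun i ↦ coeff i (X * eulerSeries))]
    simp [coeff_succ_X_mul, eulerSeries]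
  have hsummable : Summable fun i ↦ coeff i (rescale (X : ℤ⟦X⟧) eulerSeries) :=
    summable_nat_of_X_pow_dvd fun i ↦ coeff_rescale eulerSeries X i ▸ dvd_mul_right _ _
  refine tendsto_nhds_unique
    (hsummable.hasSum.tendsto_sum_nat.comp (tendsto_add_atTop_nat 1)) ?_
  exact tendsto_qPochhammerInv.congr fun N ↦ (hpartial N).symm

lemma tsum_weight : ∑' j, weight j = 𝓟 ^ 3 := by
  simp only [← coeff_rescale_eulerSeries_pow, ← map_pow]
  rw [pow_succ, tsum_coeff_rescale_X_mul, pow_two, tsum_coeff_rescale_X_mul,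
    tsum_coeff_rescale_eulerSeries]
  ring

lemma eq_zero_of_rescale_X_eq {R : Type*} [CommRing R] [IsDomain R] {J : R⟦X⟧⟦X⟧}
    (h₀ : constantCoeff J = 0) (hJ : rescale (X : R⟦X⟧) J = (1 - C X * X) * J) : J = 0 := by
  ext1 j
  rw [map_zero]
  induction j with
  | zero => rwa [coeff_zero_eq_constantCoeff_apply]
  | succ j ih =>
    have h := congrArg (coeff (j + 1)) hJ
    rw [coeff_rescale, sub_mul, one_mul, map_sub, mul_assoc, coeff_C_mul, coeff_succ_X_mul, ih,
      mul_zero, sub_zero, ← sub_eq_zero, ← sub_one_mul] at h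
    refine (mul_eq_zero.mp h).resolve_left fun hX ↦ ?_
    simpa using congrArg constantCoeff hX

lemma one_sub_mul_lambertSeries_sub_rescale :
    (1 - C (X : ℤ⟦X⟧) * X) * ((mk lambertSeries : ℤ⟦X⟧⟦X⟧) - rescale X (mk lambertSeries)) =
      C (X : ℤ⟦X⟧) * X := by
  have hdiff : (mk lambertSeries : ℤ⟦X⟧⟦X⟧) - rescale X (mk lambertSeries) =
      rescale (X : ℤ⟦X⟧) (mk 1) - 1 := by
    ext1 j
    rw [map_sub, map_sub, coeff_rescale, coeff_rescale, coeff_mk, coeff_mk, coeff_one,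
      lambertSeries]
    rcases j.eq_zero_or_pos with rfl | hj
    · simp
    · rw [if_neg hj.ne', Pi.one_apply]
      linear_combination one_sub_X_pow_mul_geomSeries hj
  have hgeom := congrArg (rescale (X : ℤ⟦X⟧)) (mk_one_mul_one_sub_eq_one ℤ⟦X⟧)
  rw [map_mul, map_sub, map_one, rescale_X] at hgeom
  rw [hdiff]
  linear_combination hgeom

-- Both sides transform alike under `z ↦ z q`, and a series with that transformation law is
-- determined by its constant term.
lemma theta_rescale_eulerSeries : θ (rescale (X : ℤ⟦X⟧) eulerSeries) =
    mk lambertSeries * rescale (X : ℤ⟦X⟧) eulerSeries := by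
  set E := rescale (X : ℤ⟦X⟧) eulerSeries with hE
  have hrescale : rescale (X : ℤ⟦X⟧) E = (1 - C X * X) * E := by
    conv_lhs => rw [hE, rescale_eulerSeries]
    rw [map_mul, map_sub, map_one, rescale_X]
  refine sub_eq_zero.mp (eq_zero_of_rescale_X_eq ?_ ?_)
  · rw [map_sub, map_mul, ← coeff_zero_eq_constantCoeff_apply (θ E), coeff_theta,
      ← coeff_zero_eq_constantCoeff_apply (mk lambertSeries), coeff_mk, lambertSeries_zero,
      Nat.cast_zero, zero_mul, zero_mul, sub_zero]
  · rw [map_sub, map_mul, ← theta_rescale, hrescale, theta_mul, map_sub, theta_mul, theta_X,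
      theta_C, theta_one]
    linear_combination E * one_sub_mul_lambertSeries_sub_rescale

lemma natCast_mul_weight (j : ℕ) :
    j * weight j = 3 * ∑ p ∈ antidiagonal j, weight p.1 * lambertSeries p.2 := by
  have h := congrArg (coeff j) (theta_pow (rescale (X : ℤ⟦X⟧) eulerSeries) 3)
  have hmul : ((3 : ℕ) : ℤ⟦X⟧⟦X⟧) * rescale (X : ℤ⟦X⟧) eulerSeries ^ (3 - 1) *
      (mk lambertSeries * rescale (X : ℤ⟦X⟧) eulerSeries) =
      C 3 * (rescale (X : ℤ⟦X⟧) eulerSeries ^ 3 * mk lambertSeries) := by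
    rw [map_ofNat]
    push_cast
    ring
  rw [theta_rescale_eulerSeries, hmul, coeff_theta, coeff_C_mul, coeff_mul] at h
  simpa only [coeff_rescale_eulerSeries_pow, coeff_mk] using h

lemma tsum_mul_natCast_mul_weight (f : ℕ → ℤ⟦X⟧) :
    ∑' a, f a * a * weight a =
      3 * ∑' i, lambertSeries i * ∑' a, f (a + i) * weight a := by
  have hdvd (p : ℕ × ℕ) :
      X ^ (p.1 + p.2) ∣ f (p.1 + p.2) * (weight p.1 * lambertSeries p.2) :=
    (X_pow_add_dvd_mul X_pow_dvd_weight X_pow_dvd_lambertSeries p.1 p.2).mul_left _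
  have hanti (a : ℕ) : f a * a * weight a =
      3 * ∑ p ∈ antidiagonal a, f (p.1 + p.2) * (weight p.1 * lambertSeries p.2) := by
    rw [mul_assoc, natCast_mul_weight, mul_left_comm, mul_sum]
    exact congrArg _ (sum_congr rfl fun p hp ↦ by rw [mem_antidiagonal.mp hp])
  have hslice (i : ℕ) : ∑' a, f (a + i) * (weight a * lambertSeries i) =
      lambertSeries i * ∑' a, f (a + i) * weight a := by
    rw [← (summable_nat_of_X_pow_dvd fun a ↦ (X_pow_dvd_weight a).mul_left _).tsum_mul_left]
    exact tsum_congr fun a ↦ by ring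
  simp only [hanti, ← hslice]
  rw [Summable.tsum_mul_left, ← tsum_prod_eq_tsum_sum_antidiagonal_of_X_pow_dvd hdvd,
    tsum_prod_of_X_pow_dvd hdvd]
  refine summable_nat_of_X_pow_dvd fun a ↦ dvd_sum fun p hp ↦ ?_
  rw [← mem_antidiagonal.mp hp]
  exact hdvd p

end EulerSeries

/-! ### Moments of the triple crank distribution -/

section CrankSum

lemma X_pow_dvd_mul_weight_mul_weight (F : ℕ × ℕ → ℤ⟦X⟧) (p : ℕ × ℕ) :
    X ^ (p.1 + p.2) ∣ F p * (weight p.1 * weight p.2) :=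
  (X_pow_add_dvd_mul X_pow_dvd_weight X_pow_dvd_weight p.1 p.2).mul_left _

lemma summable_mul_weight_mul_weight (F : ℕ × ℕ → ℤ⟦X⟧) :
    Summable fun p : ℕ × ℕ ↦ F p * (weight p.1 * weight p.2) :=
  summable_prod_of_X_pow_dvd (X_pow_dvd_mul_weight_mul_weight F)

lemma summable_mul_weight (f : ℕ → ℤ⟦X⟧) : Summable fun a ↦ f a * weight a :=
  summable_nat_of_X_pow_dvd fun a ↦ (X_pow_dvd_weight a).mul_left _

lemma tsum_mul_weight_mul_weight (F : ℕ × ℕ → ℤ⟦X⟧) :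
    ∑' p : ℕ × ℕ, F p * (weight p.1 * weight p.2) =
      ∑' b, (∑' a, F (a, b) * weight a) * weight b := by
  rw [tsum_prod_of_X_pow_dvd (X_pow_dvd_mul_weight_mul_weight F)]
  refine tsum_congr fun b ↦ ?_
  rw [← (summable_mul_weight _).tsum_mul_right]
  exact tsum_congr fun a ↦ (mul_assoc ..).symm

/-- The functional `φ ↦ ∑ₘ φ(m) cₘ`, where `cₘ` is the coefficient of `z ^ m` in the Laurent series
`1 / ((z q; q)_∞ (q / z; q)_∞) ^ 3`. Up to a factor depending only on `q`, the bracket is the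
generating function of partitions by crank. -/
def crankSum : (ℤ → ℤ) →+ ℤ⟦X⟧ where
  toFun φ := ∑' p : ℕ × ℕ, (φ (p.1 - p.2) : ℤ⟦X⟧) * (weight p.1 * weight p.2)
  map_zero' := by simp
  map_add' φ ψ := by
    simp only [Pi.add_apply, Int.cast_add, add_mul]
    exact (summable_mul_weight_mul_weight _).tsum_add (summable_mul_weight_mul_weight _)

lemma crankSum_apply (φ : ℤ → ℤ) :
    crankSum φ = ∑' p : ℕ × ℕ, (φ (p.1 - p.2) : ℤ⟦X⟧) * (weight p.1 * weight p.2) :=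
  rfl

lemma crankSum_zsmul (c : ℤ) (φ : ℤ → ℤ) : crankSum (c • φ) = c * crankSum φ := by
  rw [map_zsmul, zsmul_eq_mul]

lemma crankSum_comp_neg (φ : ℤ → ℤ) : crankSum (fun m ↦ φ (-m)) = crankSum φ := by
  rw [crankSum_apply, crankSum_apply, ← (Equiv.prodComm ℕ ℕ).tsum_eq]
  refine tsum_congr fun p ↦ ?_
  rw [Equiv.prodComm_apply, Prod.fst_swap, Prod.snd_swap, neg_sub, mul_comm (weight _)]

lemma crankSum_eq_tsum (φ : ℤ → ℤ) :
    crankSum φ = ∑' b : ℕ, (∑' a : ℕ, (φ (a - b) : ℤ⟦X⟧) * weight a) * weight b :=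
  tsum_mul_weight_mul_weight fun p ↦ (φ (p.1 - p.2) : ℤ⟦X⟧)

lemma X_pow_dvd_reduceMod_crankSum {N n : ℕ} {φ : ℤ → ℤ}
    (hφ : ∀ m : ℤ, |m| ≤ n → (N : ℤ) ∣ φ m) : X ^ (n + 1) ∣ reduceMod N (crankSum φ) := by
  refine X_pow_dvd_iff.mpr fun k hk ↦ ?_
  have hsum := ((WithPiTopology.hasSum_iff_hasSum_coeff ℤ).mp
    (summable_mul_weight_mul_weight fun p ↦ (φ (p.1 - p.2) : ℤ⟦X⟧)).hasSum k).map
      (Int.castRingHom (ZMod N)) continuous_of_discreteTopology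
  rw [coeff_reduceMod]
  refine hsum.unique (hasSum_zero.congr_fun fun p ↦ ?_)
  rcases le_or_gt (p.1 + p.2) k with hp | hp
  · have hN := hφ (p.1 - p.2) (abs_le.mpr (by omega))
    rw [Function.comp_apply, eq_intCast, ← map_intCast (C (R := ℤ)), coeff_C_mul, Int.cast_id,
      Int.cast_mul, (ZMod.intCast_zmod_eq_zero_iff_dvd _ N).mpr hN, zero_mul]
  · have hdvd := X_pow_dvd_mul_weight_mul_weight (fun p ↦ (φ (p.1 - p.2) : ℤ⟦X⟧)) p
    rw [Function.comp_apply, X_pow_dvd_iff.mp hdvd k hp, map_zero]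

lemma tsum_mul_fst_mul_weight_mul_weight (φ : ℤ → ℤ) :
    ∑' p : ℕ × ℕ, (φ (p.1 - p.2) : ℤ⟦X⟧) * p.1 * (weight p.1 * weight p.2) =
      3 * ∑' i : ℕ, lambertSeries i * crankSum fun m ↦ φ (m + i) := by
  let slice (i b : ℕ) : ℤ⟦X⟧ := ∑' a : ℕ, (φ (a - b + i) : ℤ⟦X⟧) * weight a
  have hslice (b : ℕ) : (∑' a : ℕ, (φ (a - b) : ℤ⟦X⟧) * a * weight a) * weight b =
      3 * ∑' i, lambertSeries i * (slice i b * weight b) := by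
    have hsum : Summable fun i ↦ lambertSeries i * slice i b :=
      summable_nat_of_X_pow_dvd fun i ↦ (X_pow_dvd_lambertSeries i).mul_right _
    simp only [← mul_assoc (lambertSeries _)]
    rw [hsum.tsum_mul_right, ← mul_assoc, tsum_mul_natCast_mul_weight]
    simp only [slice, Nat.cast_add, add_sub_right_comm]
  have hdvd (p : ℕ × ℕ) :
      X ^ (p.1 + p.2) ∣ lambertSeries p.1 * (slice p.1 p.2 * weight p.2) := by
    rw [pow_add]
    exact mul_dvd_mul (X_pow_dvd_lambertSeries _) ((X_pow_dvd_weight _).mul_left _)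
  have hsum := summable_prod_of_X_pow_dvd hdvd
  have hsum_slice : Summable fun b ↦ ∑' i, lambertSeries i * (slice i b * weight b) :=
    hsum.prod_symm.prod
  rw [tsum_mul_weight_mul_weight fun p ↦ (φ (p.1 - p.2) : ℤ⟦X⟧) * p.1, tsum_congr hslice,
    hsum_slice.tsum_mul_left, hsum.tsum_comm]
  simp only [crankSum_eq_tsum, slice, (summable_mul_weight _).tsum_mul_left]

lemma tsum_mul_snd_mul_weight_mul_weight (φ : ℤ → ℤ) :
    ∑' p : ℕ × ℕ, (φ (p.1 - p.2) : ℤ⟦X⟧) * p.2 * (weight p.1 * weight p.2) =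
      3 * ∑' i : ℕ, lambertSeries i * crankSum fun m ↦ φ (m - i) := by
  have hneg (i : ℕ) : crankSum (fun m ↦ φ (m - i)) = crankSum fun m ↦ φ (-(m + i)) := by
    rw [← crankSum_comp_neg]
    simp only [neg_add']
  simp only [hneg]
  rw [← tsum_mul_fst_mul_weight_mul_weight fun m ↦ φ (-m), ← (Equiv.prodComm ℕ ℕ).tsum_eq]
  refine tsum_congr fun p ↦ ?_
  rw [Equiv.prodComm_apply, Prod.fst_swap, Prod.snd_swap, neg_sub, mul_comm (weight _)]

lemma crankSum_id_mul (φ : ℤ → ℤ) : crankSum (fun m ↦ m * φ m) =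
    3 * ∑' i : ℕ, lambertSeries i * crankSum fun m ↦ φ (m + i) - φ (m - i) := by
  have hsum (ψ : ℕ → ℤ → ℤ) : Summable fun i ↦ lambertSeries i * crankSum (ψ i) :=
    summable_nat_of_X_pow_dvd fun i ↦ (X_pow_dvd_lambertSeries i).mul_right _
  have hsub (i : ℕ) : (crankSum fun m ↦ φ (m + i) - φ (m - i)) =
      (crankSum fun m ↦ φ (m + i)) - crankSum fun m ↦ φ (m - i) :=
    map_sub crankSum _ _
  simp only [hsub, mul_sub]
  rw [(hsum _).tsum_sub (hsum _), mul_sub, ← tsum_mul_fst_mul_weight_mul_weight,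
    ← tsum_mul_snd_mul_weight_mul_weight, crankSum_apply,
    ← (summable_mul_weight_mul_weight _).tsum_sub (summable_mul_weight_mul_weight _)]
  refine tsum_congr fun p ↦ ?_
  push_cast
  ring

/-- The `k`-th moment of the distribution underlying `crankSum`. -/
def crankMoment (k : ℕ) : ℤ⟦X⟧ := crankSum (· ^ k)

lemma add_pow_sub_sub_pow (m i : ℤ) (k : ℕ) : (m + i) ^ k - (m - i) ^ k =
    ∑ r ∈ range (k + 1), (1 - (-1) ^ r) * k.choose r * i ^ r * m ^ (k - r) := by
  rw [add_comm m, sub_eq_neg_add m, add_pow, add_pow, ← sum_sub_distrib]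
  refine sum_congr rfl fun r _ ↦ ?_
  rw [neg_pow i]
  ring

theorem crankMoment_succ (k : ℕ) : crankMoment (k + 1) =
    3 * ∑ r ∈ range (k + 1), (1 - (-1) ^ r) * k.choose r * Φ r * crankMoment (k - r) := by
  have hexpand (i : ℕ) : (crankSum fun m ↦ (m + i) ^ k - (m - i) ^ k) = ∑ r ∈ range (k + 1),
      ((1 - (-1) ^ r) * k.choose r * (i : ℤ⟦X⟧) ^ r) * crankMoment (k - r) := by
    have hsum : (fun m : ℤ ↦ (m + i) ^ k - (m - i) ^ k) = ∑ r ∈ range (k + 1),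
        ((1 - (-1) ^ r) * k.choose r * (i : ℤ) ^ r) • fun m : ℤ ↦ m ^ (k - r) := by
      ext m
      rw [add_pow_sub_sub_pow, Finset.sum_apply]
      rfl
    rw [hsum, map_sum]
    refine sum_congr rfl fun r _ ↦ ?_
    rw [crankSum_zsmul, crankMoment]
    push_cast
    rfl
  have hHasSum : HasSum (fun i ↦ lambertSeries i * crankSum fun m ↦ (m + i) ^ k - (m - i) ^ k)
      (∑ r ∈ range (k + 1), (1 - (-1) ^ r) * k.choose r * Φ r * crankMoment (k - r)) := by
    refine (hasSum_sum fun r _ ↦ ((hasSum_lambertSeries r).mul_left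
      ((1 - (-1) ^ r) * (k.choose r : ℤ⟦X⟧))).mul_right (crankMoment (k - r))).congr_fun
        fun i ↦ ?_
    rw [hexpand, mul_sum]
    exact sum_congr rfl fun r _ ↦ by ring
  rw [← hHasSum.tsum_eq, ← crankSum_id_mul (· ^ k), crankMoment]
  simp only [pow_succ']

lemma crankMoment_zero : crankMoment 0 = 𝓟 ^ 6 := by
  have hsum : Summable weight := summable_nat_of_X_pow_dvd X_pow_dvd_weight
  have htsum : ∑' a : ℕ, ((1 : ℤ) : ℤ⟦X⟧) * weight a = 𝓟 ^ 3 := by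
    simp only [Int.cast_one, one_mul, tsum_weight]
  rw [crankMoment, crankSum_eq_tsum]
  simp only [pow_zero, htsum]
  rw [hsum.tsum_mul_left, tsum_weight]
  ring

lemma crankMoment_one : crankMoment 1 = 0 := by
  rw [crankMoment_succ]
  simp

lemma crankMoment_two : crankMoment 2 = 6 * Φ 1 * 𝓟 ^ 6 := by
  rw [crankMoment_succ]
  norm_num [sum_range_succ, crankMoment_zero]
  ring

lemma crankMoment_four : crankMoment 4 = (6 * Φ 3 + 108 * Φ 1 ^ 2) * 𝓟 ^ 6 := by
  rw [crankMoment_succ]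
  norm_num [sum_range_succ, Nat.choose, crankMoment_zero, crankMoment_two]
  ring

lemma crankMoment_six : crankMoment 6 =
    (6 * Φ 5 + 540 * (Φ 1 * Φ 3) + 3240 * Φ 1 ^ 3) * 𝓟 ^ 6 := by
  rw [crankMoment_succ]
  norm_num [sum_range_succ, Nat.choose, crankMoment_zero, crankMoment_two, crankMoment_four]
  ring

lemma crankMoment_eight : crankMoment 8 =
    (6 * Φ 7 + 1008 * (Φ 1 * Φ 5) + 1260 * Φ 3 ^ 2 + 45360 * (Φ 1 ^ 2 * Φ 3)
      + 136080 * Φ 1 ^ 4) * 𝓟 ^ 6 := by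
  rw [crankMoment_succ]
  norm_num [sum_range_succ, Nat.choose, crankMoment_zero, crankMoment_two, crankMoment_four,
    crankMoment_six]
  ring

end CrankSum

/-! ### The rank generating functions as crank sums -/

section PronicCrankSum

/-- The function equal to `x (x + 1)` for `x ≥ 0` and to `0` for `x < 0`. -/
def truncPronic (x : ℤ) : ℤ := x.toNat * (x.toNat + 1)

lemma truncPronic_of_nonneg {x : ℤ} (hx : 0 ≤ x) : truncPronic x = x * (x + 1) := by
  rw [truncPronic, Int.toNat_of_nonneg hx]

lemma truncPronic_of_nonpos {x : ℤ} (hx : x ≤ 0) : truncPronic x = 0 := by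
  rw [truncPronic, Int.toNat_of_nonpos hx, Nat.cast_zero, zero_mul]

lemma truncPronic_add_truncPronic_neg_sub_one (x : ℤ) :
    truncPronic x + truncPronic (-x - 1) = x * (x + 1) := by
  rcases le_or_gt 0 x with hx | hx
  · rw [truncPronic_of_nonneg hx, truncPronic_of_nonpos (by omega), add_zero]
  · rw [truncPronic_of_nonpos hx.le, truncPronic_of_nonneg (by omega)]
    ring

lemma truncPronic_natCast_add_one (j : ℕ) : truncPronic (j + 1) = 2 * (2 + j).choose 2 := by
  have hchoose : (2 + j).choose 2 * 2 = (j + 2) * (j + 1) := by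
    rw [add_comm 2 j, Nat.choose_two_right, Nat.add_succ_sub_one]
    exact Nat.div_mul_cancel (Nat.even_mul_pred_self (j + 2)).two_dvd
  rw [truncPronic_of_nonneg (by omega)]
  zify at hchoose
  linear_combination -hchoose

/-- The sum `∑ₘ K(m - s) cₘ` of `crankSum` against the kernel `K = truncPronic`. -/
def pronicCrankSum (s : ℤ) : ℤ⟦X⟧ := crankSum fun m ↦ truncPronic (m - s)

lemma pronicCrankSum_add_pronicCrankSum_one_sub (s : ℤ) :
    pronicCrankSum s + pronicCrankSum (1 - s) = (6 * Φ 1 + s * (s - 1)) * 𝓟 ^ 6 := by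
  have hreflect : pronicCrankSum (1 - s) = crankSum fun m ↦ truncPronic (-(m - s) - 1) := by
    rw [pronicCrankSum, ← crankSum_comp_neg]
    exact congrArg crankSum (funext fun m ↦ congrArg truncPronic (by ring))
  have hsum : (fun m ↦ truncPronic (m - s)) + (fun m ↦ truncPronic (-(m - s) - 1)) =
      (· ^ 2) + (1 - 2 * s) • (· ^ 1) + (s * (s - 1)) • (· ^ 0) := by
    ext m
    simp only [Pi.add_apply, Pi.smul_apply, truncPronic_add_truncPronic_neg_sub_one, smul_eq_mul]
    ring
  rw [hreflect, pronicCrankSum, ← map_add, hsum, map_add, map_add, crankSum_zsmul, crankSum_zsmul,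
    ← crankMoment, ← crankMoment, ← crankMoment, crankMoment_zero, crankMoment_one,
    crankMoment_two]
  push_cast
  ring

lemma tsum_truncPronic_mul_weight (i : ℕ) :
    ∑' b : ℕ, (truncPronic (i + 1 - b) : ℤ⟦X⟧) * weight b = 2 * cubeCoeff i := by
  rw [tsum_eq_sum (s := range (i + 1)), cubeCoeff_eq_sum, mul_sum, ← Nat.sum_antidiagonal_swap,
    Nat.sum_antidiagonal_eq_sum_range_succ_mk]
  · refine sum_congr rfl fun b hb ↦ ?_
    have hb' : (i : ℤ) + 1 - b = (i - b : ℕ) + 1 := by grind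
    rw [hb', truncPronic_natCast_add_one]
    push_cast
    exact mul_assoc ..
  · intro b hb
    rw [truncPronic_of_nonpos (by grind), Int.cast_zero, zero_mul]

lemma pronicCrankSum_eq_tsum (s : ℤ) : pronicCrankSum s =
    ∑' a : ℕ, (∑' b : ℕ, (truncPronic (a - s - b) : ℤ⟦X⟧) * weight b) * weight a := by
  rw [pronicCrankSum, ← crankSum_comp_neg, crankSum_eq_tsum]
  refine tsum_congr fun a ↦ ?_
  simp only [neg_sub, sub_right_comm]

lemma pronicCrankSum_natCast_sub_one (t : ℕ) :
    pronicCrankSum (t - 1) = ∑' i, 2 * cubeCoeff i * weight (i + t) := by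
  have hzero (a : ℕ) (ha : a < t) :
      ∑' b : ℕ, (truncPronic (a - (t - 1) - b) : ℤ⟦X⟧) * weight b = 0 := by
    refine (tsum_congr fun b ↦ ?_).trans tsum_zero
    rw [truncPronic_of_nonpos (by omega), Int.cast_zero, zero_mul]
  rw [pronicCrankSum_eq_tsum, ← (summable_mul_weight _).sum_add_tsum_nat_add t,
    sum_eq_zero fun a ha ↦ by rw [hzero a (mem_range.mp ha), zero_mul], zero_add]
  refine tsum_congr fun i ↦ ?_
  rw [← tsum_truncPronic_mul_weight]
  push_cast
  simp only [show (i + t - (t - 1) : ℤ) = i + 1 by ring]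

lemma pronicCrankSum_neg_natCast_sub_one (t : ℕ) :
    pronicCrankSum (-t - 1) = ∑' i, 2 * cubeCoeff (i + t) * weight i := by
  rw [pronicCrankSum_eq_tsum]
  refine tsum_congr fun i ↦ ?_
  rw [← tsum_truncPronic_mul_weight]
  push_cast
  simp only [show (i - (-t - 1) : ℤ) = i + t + 1 by ring]

lemma pronicCrankSum_reflection (t : ℕ) :
    pronicCrankSum (t - 1) = X ^ t * pronicCrankSum (-t - 1) := by
  rw [pronicCrankSum_natCast_sub_one, pronicCrankSum_neg_natCast_sub_one,
    ← (summable_mul_weight _).tsum_mul_left]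
  refine tsum_congr fun i ↦ ?_
  rw [weight, weight, pow_add]
  ring

lemma pronicCrankSum_eq (s : ℕ) : pronicCrankSum s =
    (X : ℤ⟦X⟧) ^ (s + 1) *
      ((6 * Φ 1 + (s + 3) * (s + 2)) * 𝓟 ^ 6 - pronicCrankSum (s + 3 : ℕ)) := by
  have hreflect := pronicCrankSum_reflection (s + 1)
  have hadd := pronicCrankSum_add_pronicCrankSum_one_sub (s + 3)
  rw [show ((s + 1 : ℕ) - 1 : ℤ) = s by omega,
    show (-(s + 1 : ℕ) - 1 : ℤ) = 1 - (s + 3) by omega] at hreflect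
  push_cast at hadd ⊢
  linear_combination hreflect + X ^ (s + 1) * hadd

/-- The series `6 θ G + s (s - 1) G`, where `G` counts partitions of rank at least `s`. -/
def rankHeatSeries (s : ℕ) : ℤ⟦X⟧ :=
  6 * θ (rankGeSeries s) + s * (s - 1) * rankGeSeries s

lemma coeff_rankHeatSeries (n s : ℕ) : coeff n (rankHeatSeries s) =
    (6 * n + s * (s - 1)) * coeff n (rankGeSeries s) := by
  have hs : (s * (s - 1) : ℤ⟦X⟧) = C (s * (s - 1) : ℤ) := by simp
  rw [rankHeatSeries, map_add, coeff_ofNat_mul, coeff_theta, hs, coeff_C_mul]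
  ring

lemma rankHeatSeries_eq {s : ℕ} (hs : 1 ≤ s) : rankHeatSeries s =
    (X : ℤ⟦X⟧) ^ (s + 1) * ((6 * Φ 1 + (s + 3) * (s + 2)) * 𝓟 - rankHeatSeries (s + 3)) := by
  have hrank := rankGeSeries_eq hs
  have hθ := congrArg theta hrank
  rw [theta_mul, map_sub, theta_X_pow, theta_partitionSeries] at hθ
  rw [rankHeatSeries, rankHeatSeries]
  push_cast at hθ ⊢
  linear_combination 6 * hθ + (s * (s - 1) : ℤ⟦X⟧) * hrank

theorem partitionSeries_pow_five_mul_rankHeatSeries {s : ℕ} (hs : 1 ≤ s) :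
    𝓟 ^ 5 * rankHeatSeries s = pronicCrankSum s := by
  refine sub_eq_zero.mp (eq_zero_of_eq_neg_X_pow_mul
    (A := fun s ↦ 𝓟 ^ 5 * rankHeatSeries s - pronicCrankSum s) (d := 3) (fun s hs ↦ ?_) hs)
  simp only [rankHeatSeries_eq hs, pronicCrankSum_eq s]
  ring

end PronicCrankSum

/-! ### The congruence modulo 49 -/

section ModFortyNine

/-- The kernel whose crank sum is `𝓟⁵` times the combination of the series `rankHeatSeries` that
singles out the ranks congruent to `3` or `4` modulo `7` among the positive ranks below `7 K`. -/
def residueKernel (K : ℕ) (m : ℤ) : ℤ :=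
  ∑ i ∈ range K, (truncPronic (m - (7 * i + 3 : ℕ)) - truncPronic (m - (7 * i + 5 : ℕ)))

/-- The even polynomial that interpolates `7 * residueKernel K` modulo `49` on `0 ≤ m ≤ 7 K + 2`. -/
def residuePoly (m : ℤ) : ℤ := -4 * m ^ 8 + 7 * m ^ 6 - 3 * m ^ 2

lemma residuePoly_neg (m : ℤ) : residuePoly (-m) = residuePoly m := by
  unfold residuePoly
  ring

lemma residuePoly_add_seven (m : ℤ) :
    residuePoly (m + 7) ≡ residuePoly m + 7 * (4 * m + 14) [ZMOD 49] := by
  have hstep : ∀ x : ZMod 49, -4 * (x + 7) ^ 8 + 7 * (x + 7) ^ 6 - 3 * (x + 7) ^ 2 =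
      -4 * x ^ 8 + 7 * x ^ 6 - 3 * x ^ 2 + 7 * (4 * x + 14) := by
    decide +kernel
  refine (ZMod.intCast_eq_intCast_iff _ _ 49).mp ?_
  simp only [residuePoly]
  push_cast
  exact hstep m

lemma residueKernel_of_nonpos {m : ℤ} (hm : m ≤ 0) (K : ℕ) : residueKernel K m = 0 :=
  sum_eq_zero fun i _ ↦ by
    rw [truncPronic_of_nonpos (by omega), truncPronic_of_nonpos (by omega), sub_self]

lemma residueKernel_succ_add_seven (K : ℕ) (m : ℤ) : residueKernel (K + 1) (m + 7) =
    residueKernel K m + (truncPronic (m + 4) - truncPronic (m + 2)) := by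
  rw [residueKernel, sum_range_succ', residueKernel]
  push_cast
  ring_nf

lemma seven_mul_residueKernel_modEq (K : ℕ) {m : ℤ} (hm : m ≤ 7 * K + 2) (hm₀ : 0 ≤ m) :
    7 * residueKernel K m ≡ residuePoly m [ZMOD 49] := by
  induction K generalizing m with
  | zero =>
    obtain rfl | rfl | rfl : m = 0 ∨ m = 1 ∨ m = 2 := by omega
    all_goals decide
  | succ K ih =>
    obtain ⟨l, rfl⟩ : ∃ l, m = l + 7 := ⟨m - 7, by ring⟩
    rw [residueKernel_succ_add_seven]
    rcases lt_or_ge l 0 with hl | hl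
    · rw [residueKernel_of_nonpos hl.le, zero_add]
      have hl' : -7 ≤ l := by omega
      interval_cases l <;> decide
    · have hdiff : truncPronic (l + 4) - truncPronic (l + 2) = 4 * l + 14 := by
        rw [truncPronic_of_nonneg (by omega), truncPronic_of_nonneg (by omega)]
        ring
      rw [hdiff, mul_add]
      exact ((ih (by omega) hl).add_right _).trans (residuePoly_add_seven l).symm

lemma seven_mul_residueKernel_add_residueKernel_neg_modEq {n : ℕ} {m : ℤ} (hm : |m| ≤ n) :
    7 * (residueKernel (n + 1) m + residueKernel (n + 1) (-m)) ≡ residuePoly m [ZMOD 49] := by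
  have hm' := abs_le.mp hm
  rcases le_total 0 m with h₀ | h₀
  · rw [residueKernel_of_nonpos (neg_nonpos.mpr h₀), add_zero]
    exact seven_mul_residueKernel_modEq _ (by omega) h₀
  · rw [residueKernel_of_nonpos h₀, zero_add, ← residuePoly_neg]
    exact seven_mul_residueKernel_modEq _ (by omega) (by omega)

/-- The quotient of the crank sum of `residuePoly` by `𝓟⁶`, written in divisor sums. -/
def momentForm : ℤ⟦X⟧ :=
  -24 * Φ 7 - 4032 * (Φ 1 * Φ 5) - 5040 * Φ 3 ^ 2 - 181440 * (Φ 1 ^ 2 * Φ 3) - 544320 * Φ 1 ^ 4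
    + 42 * Φ 5 + 3780 * (Φ 1 * Φ 3) + 22680 * Φ 1 ^ 3 - 18 * Φ 1

lemma crankSum_residuePoly : crankSum residuePoly = 𝓟 ^ 6 * momentForm := by
  have hpoly : residuePoly = (-4 : ℤ) • (· ^ 8) + (7 : ℤ) • (· ^ 6) - (3 : ℤ) • (· ^ 2) := rfl
  rw [hpoly, map_sub, map_add, crankSum_zsmul, crankSum_zsmul, crankSum_zsmul, ← crankMoment,
    ← crankMoment, ← crankMoment, crankMoment_eight, crankMoment_six, crankMoment_two, momentForm]
  push_cast
  ring

/-- The sum of `rankHeatSeries (7 i + 3) - rankHeatSeries (7 i + 5)` over `i ≤ n`. -/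
def residueHeatSeries (n : ℕ) : ℤ⟦X⟧ :=
  ∑ i ∈ range (n + 1), (rankHeatSeries (7 * i + 3) - rankHeatSeries (7 * i + 5))

lemma crankSum_residueKernel (n : ℕ) :
    crankSum (residueKernel (n + 1)) = 𝓟 ^ 5 * residueHeatSeries n := by
  have hkernel : residueKernel (n + 1) = ∑ i ∈ range (n + 1),
      ((fun m ↦ truncPronic (m - (7 * i + 3 : ℕ))) -
        fun m ↦ truncPronic (m - (7 * i + 5 : ℕ))) := by
    ext m
    simp only [residueKernel, Finset.sum_apply, Pi.sub_apply]
  rw [hkernel, map_sum, residueHeatSeries, mul_sum]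
  refine sum_congr rfl fun i _ ↦ ?_
  rw [map_sub, mul_sub, partitionSeries_pow_five_mul_rankHeatSeries (by omega),
    partitionSeries_pow_five_mul_rankHeatSeries (by omega), pronicCrankSum, pronicCrankSum]

lemma isUnit_reduceMod_partitionSeries (N : ℕ) : IsUnit (reduceMod N 𝓟) := by
  refine IsUnit.map _ (PowerSeries.isUnit_iff_constantCoeff.mpr ?_)
  rw [constantCoeff_partitionSeries]
  exact isUnit_one

theorem coeff_residueHeatSeries_modEq (n : ℕ) :
    14 * coeff n (residueHeatSeries n) ≡ coeff n (𝓟 * momentForm) [ZMOD 49] := by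
  let φ : ℤ → ℤ := (7 : ℤ) • (residueKernel (n + 1) + fun m ↦ residueKernel (n + 1) (-m)) -
    residuePoly
  have hφ : crankSum φ = 𝓟 ^ 5 * (14 * residueHeatSeries n - 𝓟 * momentForm) := by
    rw [map_sub, crankSum_zsmul, map_add, crankSum_comp_neg, crankSum_residueKernel,
      crankSum_residuePoly]
    push_cast
    ring
  have hdvd : X ^ (n + 1) ∣ reduceMod 49 (crankSum φ) :=
    X_pow_dvd_reduceMod_crankSum fun m hm ↦
      (seven_mul_residueKernel_add_residueKernel_neg_modEq hm).symm.dvd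
  rw [hφ, map_mul, map_pow,
    ((isUnit_reduceMod_partitionSeries 49).pow 5).dvd_mul_left] at hdvd
  refine (Int.modEq_iff_dvd.mpr ?_).symm
  rw [← coeff_ofNat_mul, ← map_sub]
  exact dvd_coeff_iff.mpr (X_pow_dvd_iff.mp hdvd n n.lt_succ_self)

lemma coeff_rankHeatSeries_modEq {n s : ℕ} (h : 6 * n + s * (s - 1) ≡ 1 [ZMOD 7]) :
    coeff n (rankHeatSeries s) ≡ coeff n (rankGeSeries s) [ZMOD 7] := by
  rw [coeff_rankHeatSeries]
  simpa only [one_mul] using h.mul_right (coeff n (rankGeSeries s))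

lemma coeff_residueHeatSeries_modEq_countRank (k : ℕ) :
    coeff (49 * k + 47) (residueHeatSeries (49 * k + 47)) ≡
      countRank (49 * k + 47) (· % 7 = 4) [ZMOD 7] := by
  rw [countRank_emod_seven_eq_four, residueHeatSeries, map_sum, map_sum]
  refine Int.ModEq.sum fun i _ ↦ ?_
  rw [map_sub, map_sub]
  refine (coeff_rankHeatSeries_modEq ?_).sub (coeff_rankHeatSeries_modEq ?_)
  · refine (Int.modEq_iff_dvd.mpr ⟨6 * (7 * k + 6) + 7 * i ^ 2 + 5 * i + 5, ?_⟩).symm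
    push_cast
    ring
  · refine (Int.modEq_iff_dvd.mpr ⟨6 * (7 * k + 6) + 7 * i ^ 2 + 9 * i + 7, ?_⟩).symm
    push_cast
    ring

theorem seven_dvd_of_modEq_coeff_momentForm {k : ℕ} {N : ℤ}
    (hN : 14 * N ≡ coeff (49 * k + 47) (𝓟 * momentForm) [ZMOD 49]) : 7 ∣ N := by
  have hpart : (7 : ℤ) ∣ coeff (49 * k + 47) 𝓟 :=
    dvd_coeff_iff.mpr (coeff_partitionSeries_mod_seven (by omega))
  have hquasi := seven_dvd_coeff_partitionSeries_mul_quasimodularForm k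
  have hR := fortyNine_dvd_coeff_partitionSeries_mul_theta_ramanujanR k
  have hΦ : coeff (49 * k + 47) (𝓟 * Φ 1) = (49 * k + 47) * coeff (49 * k + 47) 𝓟 := by
    rw [mul_comm 𝓟, ← theta_partitionSeries, coeff_theta]
    push_cast
    rfl
  obtain ⟨p, hp⟩ := hpart
  rw [hp, show (49 * k + 47 : ℤ) * (7 * p) = 49 * (7 * k * p) + 329 * p by ring] at hΦ
  have hN' := hN.dvd
  simp only [momentForm, quasimodularForm, mul_add, mul_sub, mul_neg, mul_one, neg_mul, map_add,
    map_sub, map_neg, mul_left_comm 𝓟, coeff_ofNat_mul, hΦ, hp] at hN' hquasi hR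
  clear hN hp hΦ
  generalize coeff (R := ℤ) (49 * k + 47) = c, 𝓟 = P, Φ = S, (7 * k * p : ℤ) = v at *
  omega

theorem seven_dvd_countRank (k : ℕ) : (7 : ℤ) ∣ countRank (49 * k + 47) (· % 7 = 4) := by
  have hheat := seven_dvd_of_modEq_coeff_momentForm (coeff_residueHeatSeries_modEq (49 * k + 47))
  exact (coeff_residueHeatSeries_modEq_countRank k).dvd_iff.mp hheat

end ModFortyNine

end

end RankMoment

/-- For every integer `n ≥ 0`, `η₆(49n+47) ≡ 0 (mod 7)`. -/
theorem eta6_49n_47_mod_7 (n : ℕ) : eta6 (49 * n + 47) ≡ 0 [ZMOD 7] := by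
  exact (RankMoment.eta6_modEq_countRank _).trans
    (Int.modEq_zero_iff_dvd.mpr (RankMoment.seven_dvd_countRank n))
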